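/- arXiv:math/0412028 — 3 statements merged into one kernel-verified Lean document; each statement's English description precedes it below -/
import Mathlib

section
/- For every positive integer d and every v ∈ {0,1}^d with e_{d−1} ≺_rlex v (so that P(v) is full-dimensional in ℝ^d), the number of facets of P(v), i.e., the number of (d−1)-dimensional faces of P(v), equals 2d + |{i : sig_{s(v)}(v) < i < sig_2(v), v_i = 0}| + ε, where ε = −1 if s(v) = 2, ε = 0 if s(v) > 2 and v_{d−2} = 0, and ε = 1 if s(v) > 2 and v_{d−2} = 1. -/
/-!
Write `S k` for the set of signature indices of `v` above `k`, let `n = d - 1` be the largest and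
`m` the smallest signature index, and call `1 - x j` the defect of `x` at `j`. A 0/1-point `x` is
revlex-smaller than `v` exactly when it satisfies the covering inequalities
`x k ≤ ∑ j ∈ S k, (1 - x j)` for all `k ∈ J`, where `J` consists of the indices `k > m` with
`v k = 0` and of `m` itself (the inequality of `m` says that the total defect on `Sig(v)` is at
least one).

*Integrality* (`InRelax.mem_Pset`, `Pset_eq`). Together with the cube inequalities these describe
`P(v)`: fractional coordinates are removed one at a time from the top. If some signature index at
or above the fractional index `p` has full defect, it pays for everything below and the lower
coordinates may be kept. Otherwise `p` is the first signature index with a defect, and `x` is split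
as `(1 - x p) • a + x p • b` with `a p = 0`, `b p = 1`, giving to `b` as little as possible below
`p` (`InRelax.split`).

*Irredundancy* (`sys_solutions`, `sysPt_strict`). The only redundant inequalities are the upper
bounds of `k` and `n` for those `k ∈ J` with `S k = {n}`, as then `x k + x n ≤ 1`. For each other
inequality `sysPt` is a point where it alone is tight.

*Facets of irredundant systems* (`ncard_facets`). A proper face of a strictly feasible system lies
in the tight face of some inequality, and if it has codimension one it equals this tight face,
because an extreme convex subset contains all points of the polytope in its affine span. So the
number of facets is the number of inequalities, `d + (d - |J₁| - [J₁ ≠ ∅]) + |J|` with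
`J₁ = {k ∈ J | |S k| = 1}` (`card_sysIdx`). Since `|S k| = 1` means `k ≥ sig 2`, the set `J \ J₁`
consists of the `k` with `m < k < sig 2`, `v k = 0`, and of `m` unless `s(v) = 2`; and `J₁` is
nonempty iff `s(v) = 2` or `v (d - 2) = 0`.
-/

open Finset

/-- The set of 0/1-vectors in ℝ^d. -/
def ZeroOne (d : ℕ) : Set (Fin d → ℝ) := {x | ∀ i, x i = 0 ∨ x i = 1}

/-- `x` is reverse-lexicographically smaller than `y`:
there is an index `m` with `x m < y m` and `x i = y i` for all `i > m`
(equivalently, `x m < y m` for `m` the largest index where `x` and `y` differ). -/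
def RlexLt {d : ℕ} (x y : Fin d → ℝ) : Prop :=
  ∃ m : Fin d, x m < y m ∧ ∀ i : Fin d, m < i → x i = y i

/-- `X(v)`: the 0/1-points revlex-smaller than `v`. -/
def Xset {d : ℕ} (v : Fin d → ℝ) : Set (Fin d → ℝ) :=
  {x | x ∈ ZeroOne d ∧ RlexLt x v}

/-- The revlex-initial 0/1-polytope `P(v) = conv X(v)`. -/
noncomputable def Pset {d : ℕ} (v : Fin d → ℝ) : Set (Fin d → ℝ) :=
  convexHull ℝ (Xset v)

/-- `Sig(v)`: the support of `v` (the indices of its one-entries). -/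
noncomputable def Sig {d : ℕ} (v : Fin d → ℝ) : Finset (Fin d) :=
  @Finset.filter (Fin d) (fun i => v i = 1) (Classical.decPred _) Finset.univ

/-- `Sig_{>i}(v)`: the elements of `Sig(v)` above `i`. -/
noncomputable def SigGt {d : ℕ} (v : Fin d → ℝ) (i : Fin d) : Finset (Fin d) :=
  (Sig v).filter (fun j => i < j)

/-- The dimension of the affine hull of a set in ℝ^d. -/
noncomputable def adim {d : ℕ} (s : Set (Fin d → ℝ)) : ℕ :=
  Module.finrank ℝ (affineSpan ℝ s).direction

/-- A face of a polytope: a convex extreme subset. -/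
def IsFaceOf {d : ℕ} (P F : Set (Fin d → ℝ)) : Prop :=
  Convex ℝ F ∧ IsExtreme ℝ P F

/-- The number of indices satisfying a predicate. -/
noncomputable def cnt {d : ℕ} (p : Fin d → Prop) : ℕ :=
  (@Finset.filter (Fin d) p (Classical.decPred _) Finset.univ).card

/-! ### Facets of irredundant systems of inequalities -/

/-- A convex extreme subset `F` of `P` contains every point of `P` in its affine span: a segment
from such a point through a relative interior point of `F` can be prolonged inside `F`. -/
lemma mem_of_mem_affineSpan {d : ℕ} {P F : Set (Fin d → ℝ)} (hF : IsFaceOf P F)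
    {x : Fin d → ℝ} (hxP : x ∈ P) (hx : x ∈ affineSpan ℝ F) : x ∈ F := by
  have hne : F.Nonempty := (affineSpan_nonempty ℝ).1 ⟨x, hx⟩
  obtain ⟨y, hy⟩ := hne.intrinsicInterior hF.1
  have hyF : y ∈ F := intrinsicInterior_subset hy
  have hyS : y ∈ affineSpan ℝ F := subset_affineSpan ℝ F hyF
  obtain ⟨y', hy', rfl⟩ := mem_intrinsicInterior.1 hy
  let g : ℝ → affineSpan ℝ F := fun t => ⟨AffineMap.lineMap x (y' : Fin d → ℝ) t,
    AffineMap.lineMap_mem t hx hyS⟩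
  have hg : Continuous g := by
    refine Continuous.subtype_mk ?_ _
    exact AffineMap.lineMap_continuous
  have hg1 : g 1 = y' := by ext1; simp [g]
  have hev : ∀ᶠ t in nhds (1 : ℝ), g t ∈ interior ((↑) ⁻¹' F : Set (affineSpan ℝ F)) :=
    hg.continuousAt.eventually (isOpen_interior.mem_nhds (by rw [hg1]; exact hy'))
  obtain ⟨t, ht, ht1⟩ := ((hev.filter_mono nhdsWithin_le_nhds).and
    (self_mem_nhdsWithin : ∀ᶠ t in nhdsWithin (1 : ℝ) (Set.Ioi 1), t ∈ Set.Ioi 1)).exists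
  have htF : g t ∈ ((↑) ⁻¹' F : Set (affineSpan ℝ F)) := interior_subset ht
  have h1 : (1 : ℝ) < t := ht1
  refine hF.2.2 hxP (hF.2.1 htF) hyF ?_
  refine ⟨1 - 1 / t, 1 / t, ?_, by positivity, by ring, ?_⟩
  · rw [sub_pos, div_lt_one (by linarith)]; exact h1
  · funext i
    simp only [g, AffineMap.lineMap_apply, vsub_eq_sub, vadd_eq_add, Pi.add_apply, Pi.smul_apply,
      Pi.sub_apply, smul_eq_mul]
    field_simp
    ring

/-- The face of `{x | ∀ k, a k x ≤ b k}` on which the `k`-th inequality is tight. -/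
def tightFace {d : ℕ} {K : Type*} (a : K → (Fin d → ℝ) →L[ℝ] ℝ) (b : K → ℝ) (k : K) :
    Set (Fin d → ℝ) :=
  {x | (∀ l, a l x ≤ b l) ∧ a k x = b k}

lemma tightFace_isFaceOf {d : ℕ} {K : Type*} (a : K → (Fin d → ℝ) →L[ℝ] ℝ) (b : K → ℝ) (k : K) :
    IsFaceOf {x | ∀ l, a l x ≤ b l} (tightFace a b k) := by
  refine ⟨?_, fun x hx => hx.1, ?_⟩
  · rintro x ⟨hx, hxk⟩ y ⟨hy, hyk⟩ s t hs ht hst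
    refine ⟨fun l => ?_, ?_⟩
    · simp only [map_add, map_smul, smul_eq_mul]
      have h1 := mul_le_mul_of_nonneg_left (hx l) hs
      have h2 := mul_le_mul_of_nonneg_left (hy l) ht
      have h3 : s * b l + t * b l = b l := by rw [← add_mul, hst, one_mul]
      linarith
    · simp only [map_add, map_smul, smul_eq_mul, hxk, hyk]
      rw [← add_mul, hst, one_mul]
  · rintro x hx y hy z ⟨hz, hzk⟩ ⟨s, t, hs, ht, hst, rfl⟩
    refine ⟨hx, le_antisymm (hx k) ?_⟩
    simp only [map_add, map_smul, smul_eq_mul] at hzk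
    have h2 := mul_le_mul_of_nonneg_left (hy k) ht.le
    have h3 : s * b k + t * b k = b k := by rw [← add_mul, hst, one_mul]
    exact le_of_mul_le_mul_left (by linarith) hs

/-- Near a point of `tightFace a b k` at which every other inequality is strict, the face fills
its hyperplane; so it has codimension one. -/
lemma adim_tightFace {d : ℕ} {K : Type*} [Finite K] (a : K → (Fin d → ℝ) →L[ℝ] ℝ)
    (b : K → ℝ) (k : K) (y z : Fin d → ℝ) (hy : a k y < b k) (hz : a k z = b k)
    (hz' : ∀ l, l ≠ k → a l z < b l) : adim (tightFace a b k) = d - 1 := by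
  have hzF : z ∈ tightFace a b k := by
    refine ⟨fun l => ?_, hz⟩
    by_cases h : l = k
    · subst h; exact hz.le
    · exact (hz' l h).le
  have hdir : (affineSpan ℝ (tightFace a b k)).direction
      = LinearMap.ker (a k : (Fin d → ℝ) →ₗ[ℝ] ℝ) := by
    rw [direction_affineSpan]
    apply le_antisymm
    · rw [vectorSpan_def, Submodule.span_le]
      rintro _ ⟨p, hp, q, hq, rfl⟩
      simp [hp.2, hq.2]
    · intro u hu
      have huk : a k u = 0 := hu
      have hev : ∀ᶠ t in nhds (0 : ℝ), ∀ l, l ≠ k → a l (z + t • u) < b l := by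
        rw [Filter.eventually_all]
        intro l
        by_cases h : l = k
        · simp [h]
        · have hc : Continuous fun t : ℝ => a l (z + t • u) := by fun_prop
          have h0 : a l (z + (0 : ℝ) • u) < b l := by simpa using hz' l h
          filter_upwards [(isOpen_lt hc continuous_const).mem_nhds h0] with t ht _ using ht
      obtain ⟨t, ht, ht0⟩ := ((hev.filter_mono nhdsWithin_le_nhds).and
        (self_mem_nhdsWithin : ∀ᶠ t in nhdsWithin (0 : ℝ) (Set.Ioi 0), t ∈ Set.Ioi 0)).exists
      have ht0' : (0 : ℝ) < t := ht0
      have htk : a k (z + t • u) = b k := by simp [huk, hz]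
      have hmem : z + t • u ∈ tightFace a b k := by
        refine ⟨fun l => ?_, htk⟩
        by_cases h : l = k
        · subst h; exact htk.le
        · exact (ht l h).le
      have := vsub_mem_vectorSpan ℝ hmem hzF
      simp only [vsub_eq_sub, add_sub_cancel_left] at this
      simpa [smul_smul, ht0'.ne'] using Submodule.smul_mem _ t⁻¹ this
  have hne : (a k : (Fin d → ℝ) →ₗ[ℝ] ℝ) ≠ 0 := by
    intro h
    have h1 : ∀ x, a k x = 0 := fun x => by simpa using LinearMap.congr_fun h x
    rw [h1] at hy hz
    linarith
  have := Module.Dual.finrank_ker_add_one_of_ne_zero (f := (a k : (Fin d → ℝ) →ₗ[ℝ] ℝ)) hne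
  rw [Module.finrank_fin_fun] at this
  rw [adim, hdir]
  omega

/-- A convex extreme subset not contained in any `tightFace` meets the interior, by averaging
points that are strict for the individual inequalities; hence it is everything. -/
lemma exists_subset_tightFace {d : ℕ} {K : Type*} [Fintype K]
    (a : K → (Fin d → ℝ) →L[ℝ] ℝ) (b : K → ℝ) (y : Fin d → ℝ) (hy : ∀ k, a k y < b k)
    {F : Set (Fin d → ℝ)} (hF : IsFaceOf {x | ∀ k, a k x ≤ b k} F) (hne : F.Nonempty)
    (hdim : adim F < d) : ∃ k, F ⊆ tightFace a b k := by
  by_contra! hcon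
  have hp : ∀ k, ∃ p ∈ F, a k p < b k := by
    intro k
    obtain ⟨p, hpF, hp⟩ := Set.not_subset.1 (hcon k)
    refine ⟨p, hpF, lt_of_le_of_ne (hF.2.1 hpF k) fun h => hp ⟨hF.2.1 hpF, h⟩⟩
  choose p hpF hp using hp
  have hq : ∃ q ∈ F, ∀ k, a k q < b k := by
    rcases isEmpty_or_nonempty K with hK | hK
    · obtain ⟨q, hq⟩ := hne
      exact ⟨q, hq, fun k => isEmptyElim k⟩
    · have hc : (0 : ℝ) < Fintype.card K := by exact_mod_cast Fintype.card_pos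
      refine ⟨∑ k, (Fintype.card K : ℝ)⁻¹ • p k, ?_, fun l => ?_⟩
      · refine hF.1.sum_mem (fun _ _ => by positivity) ?_ (fun k _ => hpF k)
        simp [hc.ne']
      · simp only [map_sum, map_smul, smul_eq_mul]
        have : b l = ∑ k : K, (Fintype.card K : ℝ)⁻¹ * b l := by
          simp [Finset.card_univ]
        rw [this]
        refine Finset.sum_lt_sum (fun k _ => ?_) ⟨l, Finset.mem_univ _, ?_⟩
        · exact mul_le_mul_of_nonneg_left (hF.2.1 (hpF k) l) (by positivity)
        · exact mul_lt_mul_of_pos_left (hp l) (by positivity)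
  obtain ⟨q, hqF, hq⟩ := hq
  have hopen : IsOpen {x : Fin d → ℝ | ∀ k, a k x < b k} := by
    simp only [Set.ofPred_forall]
    exact isOpen_iInter_of_finite fun k => isOpen_lt (a k).continuous continuous_const
  have hsub : {x : Fin d → ℝ | ∀ k, a k x < b k} ⊆ F := by
    intro x hx
    have hc : Continuous fun t : ℝ => AffineMap.lineMap x q t := AffineMap.lineMap_continuous
    have hev : ∀ᶠ t in nhds (1 : ℝ),
        AffineMap.lineMap x q t ∈ {x : Fin d → ℝ | ∀ k, a k x < b k} :=
      (hopen.preimage hc).mem_nhds (by simpa using hq)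
    obtain ⟨t, ht, ht1⟩ := ((hev.filter_mono nhdsWithin_le_nhds).and
      (self_mem_nhdsWithin : ∀ᶠ t in nhdsWithin (1 : ℝ) (Set.Ioi 1), t ∈ Set.Ioi 1)).exists
    have h1 : (1 : ℝ) < t := ht1
    refine hF.2.2 (x := x) (fun k => (hx k).le) (fun k => (ht k).le) hqF ?_
    refine ⟨1 - 1 / t, 1 / t, ?_, by positivity, by ring, ?_⟩
    · rw [sub_pos, div_lt_one (by linarith)]; exact h1
    · funext i
      simp only [AffineMap.lineMap_apply, vsub_eq_sub, vadd_eq_add, Pi.add_apply, Pi.smul_apply,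
        Pi.sub_apply, smul_eq_mul]
      field_simp
      ring
  have htop : affineSpan ℝ F = ⊤ := by
    have := hopen.affineSpan_eq_top ⟨y, hy⟩
    exact top_le_iff.1 (this ▸ affineSpan_mono ℝ hsub)
  rw [adim, htop, AffineSubspace.direction_top, finrank_top, Module.finrank_fin_fun] at hdim
  exact lt_irrefl _ hdim

/-- In an irredundant system of strictly feasible inequalities, the facets of the solution set
correspond to the inequalities. Irredundancy is witnessed by points `z k` at which the `k`-th
inequality is the only tight one. -/
lemma ncard_facets {d : ℕ} (hd : 2 ≤ d) {K : Type*} [Fintype K]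
    (a : K → (Fin d → ℝ) →L[ℝ] ℝ) (b : K → ℝ) (y : Fin d → ℝ) (hy : ∀ k, a k y < b k)
    (z : K → Fin d → ℝ) (hz : ∀ k, a k (z k) = b k) (hz' : ∀ k l, l ≠ k → a l (z k) < b l) :
    Set.ncard {F : Set (Fin d → ℝ) | IsFaceOf {x | ∀ k, a k x ≤ b k} F ∧ adim F = d - 1}
      = Fintype.card K := by
  have hinj : Function.Injective (tightFace a b) := by
    intro k l hkl
    by_contra hne
    have h1 : z k ∈ tightFace a b k := by
      refine ⟨fun l => ?_, hz k⟩
      by_cases h : l = k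
      · subst h; exact (hz _).le
      · exact (hz' k l h).le
    rw [hkl] at h1
    exact absurd h1.2 (hz' k l (Ne.symm hne)).ne
  have hset : {F : Set (Fin d → ℝ) | IsFaceOf {x | ∀ k, a k x ≤ b k} F ∧ adim F = d - 1}
      = Set.range (tightFace a b) := by
    ext F
    constructor
    · rintro ⟨hF, hdim⟩
      have hne : F.Nonempty := by
        rw [Set.nonempty_iff_ne_empty]
        rintro rfl
        rw [adim, direction_affineSpan, vectorSpan_empty, finrank_bot] at hdim
        omega
      obtain ⟨k, hk⟩ := exists_subset_tightFace a b y hy hF hne (by omega)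
      refine ⟨k, (subset_antisymm hk fun x hx => mem_of_mem_affineSpan hF hx.1 ?_).symm⟩
      have hle : affineSpan ℝ F ≤ affineSpan ℝ (tightFace a b k) := affineSpan_mono ℝ hk
      have hadim := adim_tightFace a b k y (z k) (hy k) (hz k) (hz' k)
      have hdir : (affineSpan ℝ F).direction = (affineSpan ℝ (tightFace a b k)).direction :=
        Submodule.eq_of_le_of_finrank_eq (AffineSubspace.direction_le hle)
          (hdim.trans hadim.symm)
      rw [AffineSubspace.eq_of_direction_eq_of_nonempty_of_le hdir
        ((affineSpan_nonempty ℝ).2 hne) hle]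
      exact subset_affineSpan ℝ _ hx
    · rintro ⟨k, rfl⟩
      exact ⟨tightFace_isFaceOf a b k, adim_tightFace a b k y (z k) (hy k) (hz k) (hz' k)⟩
  rw [hset, Set.ncard_range_of_injective hinj, Nat.card_eq_fintype_card]

/-! ### Systems of cube and covering inequalities -/

lemma one_sub_le_sum {d : ℕ} {S : Finset (Fin d)} {x : Fin d → ℝ} (hx : ∀ i, x i ≤ 1) {n : Fin d}
    (hn : n ∈ S) : 1 - x n ≤ ∑ j ∈ S, (1 - x j) :=
  Finset.single_le_sum (f := fun j => 1 - x j) (fun j _ => sub_nonneg.2 (hx j)) hn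

/-- Indices of the irredundant upper bounds: `x k ≤ 1` and `x n ≤ 1` both follow from
`x k ≤ 1 - x n`, which is the covering inequality of `k` when `S k = {n}`. -/
def upperIdx {d : ℕ} (S : Fin d → Finset (Fin d)) (J : Finset (Fin d)) (n : Fin d) :
    Finset (Fin d) :=
  Finset.univ.filter fun i => ∀ k ∈ J, (S k).card = 1 → i ≠ k ∧ i ≠ n

/-- Index type of the system: lower bounds, irredundant upper bounds, covering inequalities. -/
abbrev SysIdx {d : ℕ} (S : Fin d → Finset (Fin d)) (J : Finset (Fin d)) (n : Fin d) : Type :=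
  (Fin d ⊕ {i // i ∈ upperIdx S J n}) ⊕ {k // k ∈ J}

/-- Left-hand sides of the system; the covering inequality of `k ∈ J` is
`x k + ∑ j ∈ S k, x j ≤ |S k|`. -/
noncomputable def sysLhs {d : ℕ} (S : Fin d → Finset (Fin d)) (J : Finset (Fin d)) (n : Fin d) :
    SysIdx S J n → (Fin d → ℝ) →L[ℝ] ℝ
  | Sum.inl (Sum.inl i) => -ContinuousLinearMap.proj i
  | Sum.inl (Sum.inr i) => ContinuousLinearMap.proj i.1
  | Sum.inr k => ContinuousLinearMap.proj k.1 + ∑ j ∈ S k.1, ContinuousLinearMap.proj j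

/-- Right-hand sides of the system. -/
def sysRhs {d : ℕ} (S : Fin d → Finset (Fin d)) (J : Finset (Fin d)) (n : Fin d) :
    SysIdx S J n → ℝ
  | Sum.inl (Sum.inl _) => 0
  | Sum.inl (Sum.inr _) => 1
  | Sum.inr k => (S k.1).card

/-- For each inequality of the system, a point at which it is the only tight one. -/
noncomputable def sysPt {d : ℕ} (S : Fin d → Finset (Fin d)) (J : Finset (Fin d)) (n : Fin d) :
    SysIdx S J n → Fin d → ℝ
  | Sum.inl (Sum.inl i) => Function.update (fun _ => 1 / 4) i 0
  | Sum.inl (Sum.inr i) => Function.update (fun _ => 1 / 4) i.1 1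
  | Sum.inr k => fun l =>
      if l = k.1 then 1 / 2
      else if l ∈ S k.1 then 1 - 1 / (2 * (S k.1).card) else 1 / (4 * (S k.1).card)

lemma sum_one_sub {d : ℕ} (S : Finset (Fin d)) (x : Fin d → ℝ) :
    ∑ j ∈ S, (1 - x j) = S.card - ∑ j ∈ S, x j := by
  simp [Finset.sum_sub_distrib]

section System

variable {d : ℕ} (S : Fin d → Finset (Fin d)) (J : Finset (Fin d)) (n : Fin d)

lemma sys_lt_iff (x : Fin d → ℝ) (κ : SysIdx S J n) :
    sysLhs S J n κ x < sysRhs S J n κ ↔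
      match κ with
      | Sum.inl (Sum.inl i) => 0 < x i
      | Sum.inl (Sum.inr i) => x i.1 < 1
      | Sum.inr k => x k.1 < ∑ j ∈ S k.1, (1 - x j) := by
  rcases κ with (i | i) | k
  · simp [sysLhs, sysRhs]
  · simp [sysLhs, sysRhs]
  · simp only [sysLhs, sysRhs, sum_one_sub, _root_.add_apply,
      _root_.sum_apply, ContinuousLinearMap.proj_apply]
    constructor <;> intro h <;> linarith

lemma sys_le_iff (x : Fin d → ℝ) (κ : SysIdx S J n) :
    sysLhs S J n κ x ≤ sysRhs S J n κ ↔
      match κ with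
      | Sum.inl (Sum.inl i) => 0 ≤ x i
      | Sum.inl (Sum.inr i) => x i.1 ≤ 1
      | Sum.inr k => x k.1 ≤ ∑ j ∈ S k.1, (1 - x j) := by
  rcases κ with (i | i) | k
  · simp [sysLhs, sysRhs]
  · simp [sysLhs, sysRhs]
  · simp only [sysLhs, sysRhs, sum_one_sub, _root_.add_apply,
      _root_.sum_apply, ContinuousLinearMap.proj_apply]
    constructor <;> intro h <;> linarith

lemma sys_solutions (hn : ∀ k ∈ J, n ∈ S k) :
    {x : Fin d → ℝ | ∀ κ, sysLhs S J n κ x ≤ sysRhs S J n κ}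
      = {x | (∀ i, 0 ≤ x i ∧ x i ≤ 1) ∧ ∀ k ∈ J, x k ≤ ∑ j ∈ S k, (1 - x j)} := by
  ext x
  simp only [Set.mem_ofPred_eq, sys_le_iff]
  constructor
  · intro h
    have h0 : ∀ i, 0 ≤ x i := fun i => h (Sum.inl (Sum.inl i))
    have hJ : ∀ k ∈ J, x k ≤ ∑ j ∈ S k, (1 - x j) := fun k hk => h (Sum.inr ⟨k, hk⟩)
    refine ⟨fun i => ⟨h0 i, ?_⟩, hJ⟩
    by_cases hi : i ∈ upperIdx S J n
    · exact h (Sum.inl (Sum.inr ⟨i, hi⟩))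
    · simp only [upperIdx, Finset.mem_filter, Finset.mem_univ, true_and, not_forall] at hi
      obtain ⟨k, hk, hcard, hi⟩ := hi
      obtain ⟨c, hc⟩ := Finset.card_eq_one.1 hcard
      have hnk := hn k hk
      rw [hc, Finset.mem_singleton] at hnk
      subst hnk
      have hk' := hJ k hk
      rw [hc, Finset.sum_singleton] at hk'
      have h1 := h0 k
      have h2 := h0 n
      by_cases hik : i = k
      · subst hik; linarith
      · have hin : i = n := by
          by_contra hin
          exact hi ⟨hik, hin⟩
        subst hin; linarith
  · rintro ⟨hb, hJ⟩ ((i | i) | k)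
    · exact (hb i).1
    · exact (hb i).2
    · exact hJ k k.2

lemma sys_interior (hn : ∀ k ∈ J, n ∈ S k) (κ : SysIdx S J n) :
    sysLhs S J n κ (fun _ => 1 / 4) < sysRhs S J n κ := by
  rw [sys_lt_iff]
  rcases κ with (i | i) | k
  · norm_num
  · norm_num
  · have := one_sub_le_sum (x := fun _ => 1 / 4) (fun _ => by norm_num) (hn k k.2)
    exact lt_of_lt_of_le (by norm_num) this

lemma sysPt_tight (hn : ∀ k ∈ J, n ∈ S k) (hdisj : ∀ k ∈ J, ∀ l ∈ J, l ∉ S k)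
    (κ : SysIdx S J n) : sysLhs S J n κ (sysPt S J n κ) = sysRhs S J n κ := by
  rcases κ with (i | i) | ⟨k, hk⟩
  · simp [sysLhs, sysRhs, sysPt]
  · simp [sysLhs, sysRhs, sysPt]
  · have hc : (0 : ℝ) < (S k).card := by exact_mod_cast Finset.card_pos.2 ⟨n, hn k hk⟩
    have hsum : ∑ j ∈ S k, sysPt S J n (Sum.inr ⟨k, hk⟩) j
        = ∑ j ∈ S k, (1 - 1 / (2 * ((S k).card : ℝ))) := by
      refine Finset.sum_congr rfl fun j hj => ?_
      have hjk : j ≠ k := fun h => hdisj k hk k hk (h ▸ hj)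
      simp [sysPt, hjk, hj]
    have hself : sysPt S J n (Sum.inr ⟨k, hk⟩) k = 1 / 2 := by simp [sysPt]
    simp only [sysLhs, sysRhs, _root_.add_apply, _root_.sum_apply,
      ContinuousLinearMap.proj_apply, hsum, hself, Finset.sum_const, nsmul_eq_mul]
    field_simp
    ring

lemma sysPt_strict (hn : ∀ k ∈ J, n ∈ S k) (hdisj : ∀ k ∈ J, ∀ l ∈ J, l ∉ S k)
    (κ μ : SysIdx S J n) (hne : μ ≠ κ) :
    sysLhs S J n μ (sysPt S J n κ) < sysRhs S J n μ := by
  rw [sys_lt_iff]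
  rcases κ with (i | ⟨i, hi⟩) | ⟨k, hk⟩
  · have hle : ∀ l, sysPt S J n (Sum.inl (Sum.inl i)) l ≤ 1 / 4 := by
      intro l
      by_cases hl : l = i
      · subst hl; simp [sysPt]
      · simp [sysPt, hl]
    rcases μ with (l | ⟨l, hl⟩) | ⟨l, hl⟩
    · have hli : l ≠ i := fun h => hne (by rw [h])
      simp [sysPt, hli]
    · exact (hle l).trans_lt (by norm_num)
    · have h1 := one_sub_le_sum (fun j => (hle j).trans (by norm_num)) (hn l hl)
      have h2 := hle l
      have h3 := hle n
      dsimp only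
      linarith
  · have hle : ∀ l, sysPt S J n (Sum.inl (Sum.inr ⟨i, hi⟩)) l ≤ 1 := by
      intro l
      by_cases hl : l = i
      · subst hl; simp [sysPt]
      · simp [sysPt, hl]; norm_num
    have hval : ∀ l, l ≠ i → sysPt S J n (Sum.inl (Sum.inr ⟨i, hi⟩)) l = 1 / 4 := by
      intro l hl
      simp [sysPt, hl]
    have hii : sysPt S J n (Sum.inl (Sum.inr ⟨i, hi⟩)) i = 1 := by simp [sysPt]
    rcases μ with (l | ⟨l, hl⟩) | ⟨l, hl⟩
    · by_cases hli : l = i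
      · subst hli; simp [hii]
      · simp [hval l hli]
    · have hli : l ≠ i := fun h => hne (by subst h; rfl)
      dsimp only
      rw [hval l hli]; norm_num
    · dsimp only
      by_cases hli : l ≠ i ∧ i ≠ n
      · have h1 := one_sub_le_sum hle (hn l hl)
        rw [hval n (Ne.symm hli.2)] at h1
        rw [hval l hli.1]
        linarith
      -- If `i ∈ {l, n}` then irredundancy of `x i ≤ 1` gives `S l` a second element.
      · have hcard : (S l).card ≠ 1 := by
          intro hc
          have := (Finset.mem_filter.1 hi).2 l hl hc
          exact hli ⟨this.1.symm, this.2⟩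
        have hpos := Finset.card_pos.2 ⟨n, hn l hl⟩
        obtain ⟨j, hj, hjn⟩ := Finset.exists_mem_ne (by omega : 1 < (S l).card) n
        have hln : l ≠ n := fun h => hdisj l hl l hl (h ▸ hn l hl)
        have hjl : j ≠ l := fun h => hdisj l hl l hl (h ▸ hj)
        have hpair : (1 - sysPt S J n (Sum.inl (Sum.inr ⟨i, hi⟩)) n)
            + (1 - sysPt S J n (Sum.inl (Sum.inr ⟨i, hi⟩)) j)
            ≤ ∑ m ∈ S l, (1 - sysPt S J n (Sum.inl (Sum.inr ⟨i, hi⟩)) m) := by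
          rw [← Finset.sum_pair (f := fun m =>
            1 - sysPt S J n (Sum.inl (Sum.inr ⟨i, hi⟩)) m) (Ne.symm hjn)]
          refine Finset.sum_le_sum_of_subset_of_nonneg ?_ fun m _ _ => sub_nonneg.2 (hle m)
          intro m hm
          rcases Finset.mem_insert.1 hm with rfl | hm
          · exact hn l hl
          · exact (Finset.mem_singleton.1 hm) ▸ hj
        by_cases hli' : l = i
        · rw [hval n (fun h => hln (hli'.trans h.symm)),
            hval j (fun h => hjl (h.trans hli'.symm))] at hpair
          have h4 := hle l
          linarith
        · have hin : i = n := by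
            by_contra hin
            exact hli ⟨hli', hin⟩
          rw [hval j (fun h => hjn (h.trans hin))] at hpair
          have h4 := hle n
          rw [hval l hli']
          linarith
  · have hc : (1 : ℝ) ≤ (S k).card := by exact_mod_cast Finset.card_pos.2 ⟨n, hn k hk⟩
    have hc2 : 1 / (2 * ((S k).card : ℝ)) ≤ 1 / 2 := by
      rw [div_le_div_iff₀ (by positivity) (by norm_num)]; linarith
    have hc3 : 0 < 1 / (4 * ((S k).card : ℝ)) := by positivity
    have hc4 : 1 / (2 * ((S k).card : ℝ)) = 2 * (1 / (4 * ((S k).card : ℝ))) := by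
      field_simp; norm_num
    have hb : ∀ l, 0 < sysPt S J n (Sum.inr ⟨k, hk⟩) l ∧
        sysPt S J n (Sum.inr ⟨k, hk⟩) l < 1 := by
      intro l
      simp only [sysPt]
      split_ifs
      · norm_num
      · constructor <;> linarith
      · constructor <;> linarith
    rcases μ with (l | ⟨l, hl⟩) | ⟨l, hl⟩
    · exact (hb l).1
    · exact (hb l).2
    · have hlk : l ≠ k := fun h => hne (by subst h; rfl)
      have h1 := one_sub_le_sum (fun j => (hb j).2.le) (hn l hl)
      have hnk : n ≠ k := fun h => hdisj k hk k hk (h ▸ hn k hk)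
      have h2 : sysPt S J n (Sum.inr ⟨k, hk⟩) n = 1 - 1 / (2 * ((S k).card : ℝ)) := by
        simp only [sysPt, if_neg hnk, if_pos (hn k hk)]
      have h3 : sysPt S J n (Sum.inr ⟨k, hk⟩) l = 1 / (4 * ((S k).card : ℝ)) := by
        simp only [sysPt, if_neg hlk, if_neg (hdisj k hk l hl)]
      dsimp only
      linarith

lemma card_sysIdx (hn : ∀ k ∈ J, n ∈ S k) (hdisj : ∀ k ∈ J, ∀ l ∈ J, l ∉ S k) :
    (Fintype.card (SysIdx S J n) : ℤ) = 2 * d + (J.filter fun k => (S k).card ≠ 1).card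
      - (if (J.filter fun k => (S k).card = 1).Nonempty then 1 else 0) := by
  have hJ := Finset.card_filter_add_card_filter_not (s := J) (fun k => (S k).card = 1)
  have hU : ((upperIdx S J n).card : ℤ) + (J.filter fun k => (S k).card = 1).card
      + (if (J.filter fun k => (S k).card = 1).Nonempty then 1 else 0) = d := by
    by_cases h : (J.filter fun k => (S k).card = 1).Nonempty
    · obtain ⟨k₀, hk₀⟩ := h
      have hcompl : (upperIdx S J n)ᶜ = insert n (J.filter fun k => (S k).card = 1) := by
        ext i
        simp only [upperIdx, Finset.mem_compl, Finset.mem_filter, Finset.mem_univ, true_and,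
          Finset.mem_insert, not_forall]
        constructor
        · rintro ⟨k, hk, hc, hi⟩
          by_cases hin : i = n
          · exact Or.inl hin
          · have hik : i = k := by
              by_contra hik
              exact hi ⟨hik, hin⟩
            subst hik
            exact Or.inr ⟨hk, hc⟩
        · rintro (rfl | ⟨hk, hc⟩)
          · exact ⟨k₀, (Finset.mem_filter.1 hk₀).1, (Finset.mem_filter.1 hk₀).2,
              fun h => h.2 rfl⟩
          · exact ⟨i, hk, hc, fun h => h.1 rfl⟩
      have hnot : n ∉ J.filter fun k => (S k).card = 1 := fun h =>
        hdisj n (Finset.mem_filter.1 h).1 n (Finset.mem_filter.1 h).1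
          (hn n (Finset.mem_filter.1 h).1)
      have h1 := Finset.card_add_card_compl (upperIdx S J n)
      rw [hcompl, Finset.card_insert_of_notMem hnot, Fintype.card_fin] at h1
      rw [if_pos ⟨k₀, hk₀⟩]
      omega
    · have huniv : upperIdx S J n = Finset.univ := by
        ext i
        simp only [upperIdx, Finset.mem_filter, Finset.mem_univ, true_and, iff_true]
        intro k hk hc
        exact absurd ⟨k, Finset.mem_filter.2 ⟨hk, hc⟩⟩ h
      rw [if_neg h, huniv, Finset.not_nonempty_iff_eq_empty.1 h]
      simp
  simp only [SysIdx, Fintype.card_sum, Fintype.card_coe, Fintype.card_fin]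
  push_cast
  have hJ' : ((J.filter fun k => (S k).card = 1).card : ℤ)
      + (J.filter fun k => (S k).card ≠ 1).card = J.card := by exact_mod_cast hJ
  linarith

end System

/-! ### Integrality of the relaxation -/

/-- The relaxation of `P(v)`: the points of the cube in which every one-entry outside
the signature `T` is paid for by the defects `1 - x j` at larger signature indices, and in which
the total defect on `T` is at least one. -/
def InRelax {d : ℕ} (T : Finset (Fin d)) (x : Fin d → ℝ) : Prop :=
  (∀ i, 0 ≤ x i ∧ x i ≤ 1) ∧
    (∀ i, i ∉ T → x i ≤ ∑ j ∈ T.filter (fun j => i < j), (1 - x j)) ∧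
    1 ≤ ∑ j ∈ T, (1 - x j)

/-- Changing a point of the relaxation at indices `≤ p` is harmless if some signature index
`j ≥ p` has full defect, since `j` alone then pays for all smaller indices. -/
lemma InRelax.modify {d : ℕ} {T : Finset (Fin d)} {x x' : Fin d → ℝ} (hx : InRelax T x)
    {p j : Fin d} (hbox : ∀ i, 0 ≤ x' i ∧ x' i ≤ 1) (hagree : ∀ i, p < i → x' i = x i)
    (hjT : j ∈ T) (hpj : p ≤ j) (hj : x' j = 0) : InRelax T x' := by
  refine ⟨hbox, fun i hi => ?_, ?_⟩
  · by_cases hip : i ≤ p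
    · have hij : i < j := lt_of_le_of_ne (hip.trans hpj) fun h => hi (h ▸ hjT)
      have h1 := one_sub_le_sum (S := T.filter (fun j => i < j)) (fun l => (hbox l).2)
        (Finset.mem_filter.2 ⟨hjT, hij⟩)
      rw [hj] at h1
      linarith [(hbox i).2]
    · push Not at hip
      rw [hagree i hip]
      refine (hx.2.1 i hi).trans (le_of_eq ?_)
      refine Finset.sum_congr rfl fun l hl => ?_
      rw [hagree l (hip.trans (Finset.mem_filter.1 hl).2)]
  · have h1 := one_sub_le_sum (fun l => (hbox l).2) hjT
    rw [hj] at h1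
    linarith

/-- An integral point of the relaxation is smaller than `v`: the largest signature index with
nonzero defect is the largest index at which the two differ. -/
lemma InRelax.mem_Xset {d : ℕ} {T : Finset (Fin d)} {v x : Fin d → ℝ} (hv : v ∈ ZeroOne d)
    (hT : ∀ i, i ∈ T ↔ v i = 1) (hx : InRelax T x) (hint : x ∈ ZeroOne d) : x ∈ Xset v := by
  refine ⟨hint, ?_⟩
  have hne : (T.filter fun j => x j = 0).Nonempty := by
    by_contra h
    rw [Finset.not_nonempty_iff_eq_empty, Finset.filter_eq_empty_iff] at h
    have h0 : ∑ j ∈ T, (1 - x j) = 0 := Finset.sum_eq_zero fun j hj => by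
      rw [(hint j).resolve_left (h hj), sub_self]
    linarith [hx.2.2]
  obtain ⟨hpT, hp0⟩ := Finset.mem_filter.1 (Finset.max'_mem _ hne)
  have hmax : ∀ j ∈ T, (T.filter fun j => x j = 0).max' hne < j → x j = 1 := by
    intro j hj hlt
    refine (hint j).resolve_left fun h0 => ?_
    exact absurd (Finset.le_max' _ j (Finset.mem_filter.2 ⟨hj, h0⟩)) (not_le.2 hlt)
  refine ⟨(T.filter fun j => x j = 0).max' hne, ?_, fun i hi => ?_⟩
  · rw [hp0, (hT _).1 hpT]; exact one_pos
  · by_cases hiT : i ∈ T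
    · rw [hmax i hiT hi, (hT i).1 hiT]
    · have h0 : v i = 0 := (hv i).resolve_right fun h => hiT ((hT i).2 h)
      have h1 : ∑ j ∈ T.filter (fun j => i < j), (1 - x j) = 0 :=
        Finset.sum_eq_zero fun j hj => by
          rw [hmax j (Finset.mem_filter.1 hj).1 (hi.trans (Finset.mem_filter.1 hj).2), sub_self]
      have h2 := hx.2.1 i hiT
      rw [h0]
      linarith [(hx.1 i).1]

/-- Splitting at a fractional signature index `p` above which no signature index has a defect.
Below `p`, the part with `p`-th coordinate one takes as little of `x` as the cube allows. -/
lemma InRelax.split {d : ℕ} {T : Finset (Fin d)} {x : Fin d → ℝ} (hx : InRelax T x)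
    {p : Fin d} (hp0 : 0 < x p) (hp1 : x p < 1) (hpT : p ∈ T)
    (habove : ∀ j ∈ T, p < j → x j = 1) :
    ∃ a b : Fin d → ℝ, InRelax T a ∧ InRelax T b ∧ a p = 0 ∧ b p = 1 ∧
      (∀ i, p < i → a i = x i ∧ b i = x i) ∧ (1 - x p) • a + x p • b = x := by
  have hp1' : 0 < 1 - x p := by linarith
  set a : Fin d → ℝ := fun i =>
    if i < p then min (x i / (1 - x p)) 1 else if i = p then 0 else x i with ha
  set b : Fin d → ℝ := fun i =>
    if i < p then max 0 ((x i - (1 - x p)) / x p) else if i = p then 1 else x i with hb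
  have hap : a p = 0 := by simp [ha]
  have hbp : b p = 1 := by simp [hb]
  have haa : ∀ i, p < i → a i = x i := fun i hi => by
    simp [ha, hi.not_gt, hi.ne']
  have hba : ∀ i, p < i → b i = x i := fun i hi => by
    simp [hb, hi.not_gt, hi.ne']
  have hbl : ∀ i, i < p → b i = max 0 ((x i - (1 - x p)) / x p) := fun i hi => by
    simp [hb, hi]
  have hal : ∀ i, i < p → a i = min (x i / (1 - x p)) 1 := fun i hi => by
    simp [ha, hi]
  have habox : ∀ i, 0 ≤ a i ∧ a i ≤ 1 := by
    intro i
    rcases lt_trichotomy i p with h | rfl | h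
    · rw [hal i h]
      exact ⟨le_min (div_nonneg (hx.1 i).1 hp1'.le) zero_le_one, min_le_right _ _⟩
    · rw [hap]; norm_num
    · rw [haa i h]; exact hx.1 i
  have hbbox : ∀ i, 0 ≤ b i ∧ b i ≤ 1 := by
    intro i
    rcases lt_trichotomy i p with h | rfl | h
    · rw [hbl i h]
      refine ⟨le_max_left _ _, max_le zero_le_one ?_⟩
      rw [div_le_one hp0]
      linarith [(hx.1 i).2]
    · rw [hbp]; norm_num
    · rw [hba i h]; exact hx.1 i
  have key : ∀ G ⊆ T, 1 ≤ ∑ j ∈ G, (1 - b j) ∨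
      (∑ j ∈ G, (1 - x j)) - (1 - x p) ≤ x p * ∑ j ∈ G, (1 - b j) := by
    intro G hG
    by_cases hex : ∃ j ∈ G, j < p ∧ x j ≤ 1 - x p
    · left
      obtain ⟨j, hjG, hjp, hj⟩ := hex
      have h1 := one_sub_le_sum (fun l => (hbbox l).2) hjG
      have h2 : b j = 0 := by
        rw [hbl j hjp]
        exact max_eq_left (div_nonpos_of_nonpos_of_nonneg (by linarith) hp0.le)
      rw [h2] at h1
      linarith
    · right
      push Not at hex
      have hterm : ∀ j ∈ G, (1 - x j) - (if j = p then 1 - x p else 0) = x p * (1 - b j) := by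
        intro j hj
        rcases lt_trichotomy j p with h | rfl | h
        · have h3 := hex j hj h
          rw [if_neg h.ne, hbl j h, max_eq_right (div_nonneg (by linarith) hp0.le)]
          field_simp
          ring
        · rw [if_pos rfl, hbp]; ring
        · rw [if_neg h.ne', hba j h, habove j (hG hj) h]; ring
      have h5 := Finset.sum_sub_distrib (s := G) (fun j => 1 - x j)
        (fun j => if j = p then 1 - x p else 0)
      rw [Finset.mul_sum, ← Finset.sum_congr rfl hterm, h5]
      have h4 : ∑ j ∈ G, (if j = p then 1 - x p else 0) ≤ 1 - x p := by
        rw [Finset.sum_ite_eq']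
        split_ifs <;> linarith
      linarith
  have hbR : InRelax T b := by
    refine ⟨hbbox, fun i hi => ?_, ?_⟩
    · rcases lt_trichotomy i p with h | rfl | h
      · rcases key _ (Finset.filter_subset (fun j => i < j) T) with h1 | h1
        · exact (hbbox i).2.trans h1
        · have h2 := hx.2.1 i hi
          have h3 : 0 ≤ ∑ j ∈ T.filter (fun j => i < j), (1 - b j) :=
            Finset.sum_nonneg fun j _ => sub_nonneg.2 (hbbox j).2
          rw [hbl i h]
          refine max_le h3 ?_
          rw [div_le_iff₀ hp0]
          linarith
      · exact absurd hpT hi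
      · rw [hba i h]
        refine (hx.2.1 i hi).trans (le_of_eq ?_)
        refine Finset.sum_congr rfl fun l hl => ?_
        rw [hba l (h.trans (Finset.mem_filter.1 hl).2)]
    · rcases key T subset_rfl with h1 | h1
      · exact h1
      · have h2 := hx.2.2
        by_contra hlt
        push Not at hlt
        have := mul_lt_mul_of_pos_left hlt hp0
        linarith
  refine ⟨a, b, hx.modify habox haa hpT le_rfl hap, hbR, hap, hbp,
    fun i hi => ⟨haa i hi, hba i hi⟩, ?_⟩
  funext i
  simp only [Pi.add_apply, Pi.smul_apply, smul_eq_mul]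
  rcases lt_trichotomy i p with h | rfl | h
  · rw [hal i h, hbl i h]
    rcases le_total (x i) (1 - x p) with h1 | h1
    · rw [min_eq_left ((div_le_one hp1').2 h1),
        max_eq_left (div_nonpos_of_nonpos_of_nonneg (by linarith) hp0.le)]
      field_simp
      ring
    · rw [min_eq_right ((one_le_div hp1').2 h1),
        max_eq_right (div_nonneg (by linarith) hp0.le)]
      field_simp
      ring
  · rw [hap, hbp]; ring
  · rw [haa i h, hba i h]; ring

/-- The relaxation is integral. Fractional coordinates are removed from the top: a point whose
coordinates above `p` are integral is a convex combination of two points of the relaxation whose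
coordinates from `p` on are integral. -/
lemma InRelax.mem_Pset {d : ℕ} {T : Finset (Fin d)} {v : Fin d → ℝ} (hv : v ∈ ZeroOne d)
    (hT : ∀ i, i ∈ T ↔ v i = 1) (m : ℕ) : ∀ x : Fin d → ℝ, InRelax T x →
      (∀ i : Fin d, m ≤ i.val → x i = 0 ∨ x i = 1) → x ∈ Pset v := by
  induction m with
  | zero =>
    intro x hx hint
    exact subset_convexHull ℝ _ (hx.mem_Xset hv hT fun i => hint i (Nat.zero_le _))
  | succ m ih =>
    intro x hx hint
    by_cases hm : m < d
    swap
    · exact ih x hx fun i hi => absurd i.2 (by omega)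
    set p : Fin d := ⟨m, hm⟩ with hp
    have habv : ∀ i : Fin d, m ≤ i.val → i = p ∨ p < i := by
      intro i hi
      rcases hi.eq_or_lt with h | h
      · exact Or.inl (Fin.ext h.symm)
      · exact Or.inr h
    have hint' : ∀ i : Fin d, p < i → x i = 0 ∨ x i = 1 := fun i hi => hint i hi
    by_cases hxp : x p = 0 ∨ x p = 1
    · refine ih x hx fun i hi => ?_
      rcases habv i hi with rfl | h
      · exact hxp
      · exact hint' i h
    push Not at hxp
    have hp0 : 0 < x p := lt_of_le_of_ne (hx.1 p).1 (Ne.symm hxp.1)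
    have hp1 : x p < 1 := lt_of_le_of_ne (hx.1 p).2 hxp.2
    obtain ⟨a, b, ha, hb, hap, hbp, hab, hcomb⟩ : ∃ a b : Fin d → ℝ, InRelax T a ∧ InRelax T b ∧
        a p = 0 ∧ b p = 1 ∧ (∀ i, p < i → a i = x i ∧ b i = x i) ∧
        (1 - x p) • a + x p • b = x := by
      by_cases hex : ∃ j ∈ T, p < j ∧ x j = 0
      · obtain ⟨j, hjT, hpj, hj⟩ := hex
        have hupd : ∀ c : ℝ, 0 ≤ c → c ≤ 1 → InRelax T (Function.update x p c) := by
          intro c hc0 hc1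
          refine hx.modify (p := p) (j := j) (fun i => ?_) (fun i hi => ?_) hjT hpj.le ?_
          · by_cases hi : i = p
            · subst hi; simp [hc0, hc1]
            · simpa [hi] using hx.1 i
          · simp [hi.ne']
          · simp [hpj.ne', hj]
        refine ⟨Function.update x p 0, Function.update x p 1, hupd 0 le_rfl zero_le_one,
          hupd 1 zero_le_one le_rfl, by simp, by simp, fun i hi => by simp [hi.ne'], ?_⟩
        funext i
        by_cases hi : i = p
        · subst hi; simp
        · simp [hi]; ring
      · push Not at hex
        have habove : ∀ j ∈ T, p < j → x j = 1 := fun j hj hpj =>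
          (hint' j hpj).resolve_left (hex j hj hpj)
        refine hx.split hp0 hp1 ?_ habove
        by_contra hpT
        have h1 := hx.2.1 p hpT
        rw [Finset.sum_eq_zero fun j hj => by
          rw [habove j (Finset.mem_filter.1 hj).1 (Finset.mem_filter.1 hj).2, sub_self]] at h1
        linarith
    have haP : a ∈ Pset v := by
      refine ih a ha fun i hi => ?_
      rcases habv i hi with rfl | h
      · exact Or.inl hap
      · rw [(hab i h).1]; exact hint' i h
    have hbP : b ∈ Pset v := by
      refine ih b hb fun i hi => ?_
      rcases habv i hi with rfl | h
      · exact Or.inr hbp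
      · rw [(hab i h).2]; exact hint' i h
    rw [← hcomb]
    exact convex_convexHull ℝ _ haP hbP (by linarith) hp0.le (by ring)

/-- Inequality description of `P(v)` for `m = min Sig(v)`. The index set of the covering
inequalities consists of the non-signature indices above `m` and of `m` itself, whose inequality
says that the total defect on the signature is at least one. -/
lemma Pset_eq {d : ℕ} {T : Finset (Fin d)} {v : Fin d → ℝ} (hv : v ∈ ZeroOne d)
    (hT : ∀ i, i ∈ T ↔ v i = 1) {m : Fin d} (hm : m ∈ T) (hmin : ∀ j ∈ T, m ≤ j) :
    Pset v = {x | (∀ i, 0 ≤ x i ∧ x i ≤ 1) ∧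
      ∀ k ∈ Finset.univ.filter (fun k => k = m ∨ (m < k ∧ k ∉ T)),
        x k ≤ ∑ j ∈ T.filter (fun j => k < j), (1 - x j)} := by
  apply subset_antisymm
  · refine convexHull_min ?_ ?_
    · rintro x ⟨hx, p, hp, hagree⟩
      have hp0 : x p = 0 := by
        rcases hx p with h | h
        · exact h
        · rcases hv p with h' | h' <;> rw [h, h'] at hp <;> linarith
      have hpv : v p = 1 := by
        rcases hv p with h | h
        · rw [h, hp0] at hp; exact absurd hp (lt_irrefl _)
        · exact h
      have hpT : p ∈ T := (hT p).2 hpv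
      have hbox : ∀ i, 0 ≤ x i ∧ x i ≤ 1 := fun i => by
        rcases hx i with h | h <;> rw [h] <;> norm_num
      refine ⟨hbox, fun k hk => ?_⟩
      have hsum : 0 ≤ ∑ j ∈ T.filter (fun j => k < j), (1 - x j) :=
        Finset.sum_nonneg fun j _ => sub_nonneg.2 (hbox j).2
      rcases lt_trichotomy k p with h | rfl | h
      · have h1 := one_sub_le_sum (S := T.filter (fun j => k < j)) (fun l => (hbox l).2)
          (Finset.mem_filter.2 ⟨hpT, h⟩)
        rw [hp0] at h1
        linarith [(hbox k).2]
      · rw [hp0]; exact hsum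
      · have hkT : k ∉ T := by
          rcases (Finset.mem_filter.1 hk).2 with rfl | h'
          · exact absurd (hmin p hpT) (not_le.2 h)
          · exact h'.2
        rw [hagree k h, (hv k).resolve_right fun h' => hkT ((hT k).2 h')]
        exact hsum
    · rintro x ⟨hx, hxJ⟩ y ⟨hy, hyJ⟩ s t hs ht hst
      refine ⟨fun i => ?_, fun k hk => ?_⟩
      · simp only [Pi.add_apply, Pi.smul_apply, smul_eq_mul]
        constructor
        · exact add_nonneg (mul_nonneg hs (hx i).1) (mul_nonneg ht (hy i).1)
        · nlinarith [(hx i).2, (hy i).2]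
      · have h1 := mul_le_mul_of_nonneg_left (hxJ k hk) hs
        have h2 := mul_le_mul_of_nonneg_left (hyJ k hk) ht
        have h3 : ∑ j ∈ T.filter (fun j => k < j), (1 - (s • x + t • y) j)
            = s * ∑ j ∈ T.filter (fun j => k < j), (1 - x j)
              + t * ∑ j ∈ T.filter (fun j => k < j), (1 - y j) := by
          rw [Finset.mul_sum, Finset.mul_sum, ← Finset.sum_add_distrib]
          refine Finset.sum_congr rfl fun j _ => ?_
          simp only [Pi.add_apply, Pi.smul_apply, smul_eq_mul]
          linear_combination (-1 : ℝ) * hst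
        rw [h3]
        simp only [Pi.add_apply, Pi.smul_apply, smul_eq_mul]
        linarith
  · rintro x ⟨hbox, hJ⟩
    have hTm : T = insert m (T.filter fun j => m < j) := by
      ext j
      simp only [Finset.mem_insert, Finset.mem_filter]
      constructor
      · intro hj
        rcases (hmin j hj).eq_or_lt with h | h
        · exact Or.inl h.symm
        · exact Or.inr ⟨hj, h⟩
      · rintro (rfl | h)
        · exact hm
        · exact h.1
    have htot : 1 ≤ ∑ j ∈ T, (1 - x j) := by
      have h1 := hJ m (by simp)
      rw [hTm, Finset.sum_insert (by simp)]
      linarith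
    have hrelax : InRelax T x := by
      refine ⟨hbox, fun i hi => ?_, htot⟩
      rcases lt_trichotomy i m with h | rfl | h
      · have : T.filter (fun j => i < j) = T :=
          Finset.filter_true_of_mem fun j hj => h.trans_le (hmin j hj)
        rw [this]
        exact (hbox i).2.trans htot
      · exact absurd hm hi
      · exact hJ i (by simp [h, hi])
    exact hrelax.mem_Pset hv hT d x fun i hi => absurd i.2 (by omega)

/-! ### The facet count -/

open Classical in
/-- for full-dimensional `P(v)`, the number of facets
(i.e. `(d−1)`-dimensional faces) equals
`2d + |{i : sig_{s(v)}(v) < i < sig_2(v), v_i = 0}| + ε`. -/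
theorem stmt7 (d : ℕ) (hd : 0 < d) (v : Fin d → ℝ) (hv : v ∈ ZeroOne d)
    (hfull : RlexLt (Pi.single (⟨d - 1, by omega⟩ : Fin d) (1 : ℝ)) v)
    (w : ℕ) (hw : w = (Sig v).card)
    (sig : ℕ → Fin d)
    (hanti : StrictAntiOn sig (Set.Icc 1 w))
    (himg : ∀ j : Fin d, j ∈ Sig v ↔ ∃ q, 1 ≤ q ∧ q ≤ w ∧ sig q = j) :
    (Set.ncard {F : Set (Fin d → ℝ) | IsFaceOf (Pset v) F ∧ adim F = d - 1} : ℤ)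
      = 2 * d + (cnt (fun i : Fin d => sig w < i ∧ i < sig 2 ∧ v i = 0) : ℤ) +
        (if (Sig v).card = 2 then (-1 : ℤ)
         else if v ⟨d - 2, by omega⟩ = 0 then 0 else 1) := by
  classical
  have hSig : ∀ i, i ∈ Sig v ↔ v i = 1 := fun i => by simp [Sig]
  set n : Fin d := ⟨d - 1, by omega⟩ with hn_def
  have hle_n : ∀ i : Fin d, i ≤ n := fun i => Fin.le_def.2 (by simp [hn_def]; omega)
  -- `e_{d-1} ≺ v` gives `d - 1 ∈ Sig(v)` and a second signature index `p`.
  obtain ⟨hnS, p, hpS, hpn⟩ : n ∈ Sig v ∧ ∃ p ∈ Sig v, p < n := by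
    obtain ⟨p, hp, hagree⟩ := hfull
    rcases (hle_n p).eq_or_lt with h | h
    · rw [h, Pi.single_eq_same] at hp
      rcases hv n with h' | h' <;> rw [h'] at hp <;> linarith
    · rw [Pi.single_eq_of_ne h.ne] at hp
      refine ⟨(hSig n).2 ?_, p, (hSig p).2 ?_, h⟩
      · rw [← hagree n h, Pi.single_eq_same]
      · exact (hv p).resolve_left fun h0 => by rw [h0] at hp; exact lt_irrefl _ hp
  have hw2 : 2 ≤ w := by
    rw [hw]
    exact Finset.one_lt_card.2 ⟨n, hnS, p, hpS, hpn.ne'⟩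
  have hd2 : 2 ≤ d := by
    have := Fin.lt_def.1 hpn
    simp only [hn_def] at this
    omega
  have hsigS : ∀ q, 1 ≤ q → q ≤ w → sig q ∈ Sig v := fun q h1 h2 =>
    (himg _).2 ⟨q, h1, h2, rfl⟩
  have hanti' : ∀ q r, 1 ≤ q → q < r → r ≤ w → sig r < sig q := fun q r h1 h2 h3 =>
    hanti ⟨h1, by omega⟩ ⟨by omega, h3⟩ h2
  have hsig1 : sig 1 = n := by
    obtain ⟨q, hq1, hqw, hq⟩ := (himg n).1 hnS
    rcases hq1.eq_or_lt with h | h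
    · rw [h, hq]
    · exact absurd (hle_n (sig 1)) (not_le.2 (hq ▸ hanti' 1 q le_rfl h hqw))
  set m := sig w with hm_def
  have hmS : m ∈ Sig v := hsigS w (by omega) le_rfl
  have hmin : ∀ j ∈ Sig v, m ≤ j := by
    intro j hj
    obtain ⟨q, hq1, hqw, rfl⟩ := (himg j).1 hj
    rcases hqw.eq_or_lt with h | h
    · rw [hm_def, h]
    · exact (hanti' q w hq1 h le_rfl).le
  have hm2 : m ≤ sig 2 := hmin _ (hsigS 2 (by omega) hw2)
  have h2n : sig 2 < n := hsig1 ▸ hanti' 1 2 le_rfl (by omega) hw2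
  have hmn : m < n := hm2.trans_lt h2n
  have hm2iff : m = sig 2 ↔ w = 2 := by
    constructor
    · intro h
      by_contra hne
      exact absurd h (hanti' 2 w (by omega) (by omega) le_rfl).ne
    · intro h
      rw [hm_def, h]
  set S : Fin d → Finset (Fin d) := fun k => (Sig v).filter fun j => k < j with hS
  set J : Finset (Fin d) := Finset.univ.filter fun k => k = m ∨ (m < k ∧ k ∉ Sig v) with hJ
  have hJmem : ∀ k, k ∈ J ↔ k = m ∨ (m < k ∧ k ∉ Sig v) := fun k => by simp [hJ]
  have hSmem : ∀ k j, j ∈ S k ↔ j ∈ Sig v ∧ k < j := fun k j => by simp [hS]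
  have hJn : ∀ k ∈ J, k < n := by
    intro k hk
    refine lt_of_le_of_ne (hle_n k) ?_
    rintro rfl
    rcases (hJmem _).1 hk with h | h
    · exact hmn.ne h.symm
    · exact h.2 hnS
  have hn : ∀ k ∈ J, n ∈ S k := fun k hk => (hSmem k n).2 ⟨hnS, hJn k hk⟩
  have hdisj : ∀ k ∈ J, ∀ l ∈ J, l ∉ S k := by
    intro k hk l hl hlk
    rcases (hJmem l).1 hl with h | h
    · have hkm : k < m := h ▸ ((hSmem k l).1 hlk).2
      rcases (hJmem k).1 hk with h' | h'
      · exact hkm.ne h'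
      · exact hkm.not_gt h'.1
    · exact h.2 ((hSmem k l).1 hlk).1
  -- The covering inequality of `k` has a single term exactly when `sig 2 ≤ k`.
  have hcard1 : ∀ k ∈ J, (S k).card = 1 ↔ sig 2 ≤ k := by
    intro k hk
    constructor
    · intro hc
      by_contra hlt
      push Not at hlt
      have h2 : sig 2 ∈ S k := (hSmem k _).2 ⟨hsigS 2 (by omega) hw2, hlt⟩
      have := Finset.one_lt_card.2 ⟨sig 2, h2, n, hn k hk, h2n.ne⟩
      omega
    · intro hle
      rw [Finset.card_eq_one]
      refine ⟨n, Finset.eq_singleton_iff_unique_mem.2 ⟨hn k hk, fun j hj => ?_⟩⟩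
      obtain ⟨hjS, hkj⟩ := (hSmem k j).1 hj
      obtain ⟨q, hq1, hqw, rfl⟩ := (himg j).1 hjS
      rcases hq1.eq_or_lt with h | h
      · rw [← h, hsig1]
      · exfalso
        have : sig q ≤ sig 2 := by
          rcases (show 2 ≤ q from h).eq_or_lt with h' | h'
          · rw [h']
          · exact (hanti' 2 q (by omega) h' hqw).le
        exact absurd (hle.trans_lt hkj) (not_lt.2 this)
  have hP : Pset v = {x | ∀ κ, sysLhs S J n κ x ≤ sysRhs S J n κ} := by
    rw [sys_solutions S J n hn, Pset_eq hv hSig hmS hmin]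
  rw [hP, ncard_facets hd2 (sysLhs S J n) (sysRhs S J n) (fun _ => 1 / 4)
    (sys_interior S J n hn) (sysPt S J n) (sysPt_tight S J n hn hdisj)
    (sysPt_strict S J n hn hdisj), card_sysIdx S J n hn hdisj]
  have hv0 : ∀ i, v i = 0 ↔ i ∉ Sig v := by
    intro i
    rw [hSig]
    constructor
    · intro h h'
      rw [h] at h'
      exact zero_ne_one h'
    · exact fun h => (hv i).resolve_right h
  -- Long covering inequalities: the counted indices, and `m` unless `m = sig 2`.
  have hlong : ((J.filter fun k => (S k).card ≠ 1).card : ℤ)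
      = (cnt (fun i : Fin d => m < i ∧ i < sig 2 ∧ v i = 0) : ℤ) + (if w = 2 then 0 else 1) := by
    have hbase : ∀ k, k ∈ (J.filter fun k => (S k).card ≠ 1) ↔
        (k = m ∨ (m < k ∧ k ∉ Sig v)) ∧ k < sig 2 := by
      intro k
      rw [Finset.mem_filter, ← hJmem]
      refine and_congr_right fun hk => ?_
      rw [Ne, hcard1 k hk, not_le]
    rw [cnt]
    by_cases h : w = 2
    · rw [if_pos h, add_zero]
      congr 2
      ext k
      rw [hbase]
      simp only [Finset.mem_filter, Finset.mem_univ, true_and, hv0]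
      have := hm2iff.2 h
      constructor
      · rintro ⟨rfl | h1, h2⟩
        · exact absurd this h2.ne
        · exact ⟨h1.1, h2, h1.2⟩
      · rintro ⟨h1, h2, h3⟩
        exact ⟨Or.inr ⟨h1, h3⟩, h2⟩
    · rw [if_neg h]
      have hlt : m < sig 2 := lt_of_le_of_ne hm2 fun h' => h (hm2iff.1 h')
      have hins : (J.filter fun k => (S k).card ≠ 1)
          = insert m (Finset.univ.filter fun i : Fin d => m < i ∧ i < sig 2 ∧ v i = 0) := by
        ext k
        rw [hbase]
        simp only [Finset.mem_insert, Finset.mem_filter, Finset.mem_univ, true_and, hv0]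
        constructor
        · rintro ⟨h1 | h1, h2⟩
          · exact Or.inl h1
          · exact Or.inr ⟨h1.1, h2, h1.2⟩
        · rintro (rfl | ⟨h1, h2, h3⟩)
          · exact ⟨Or.inl rfl, hlt⟩
          · exact ⟨Or.inr ⟨h1, h3⟩, h2⟩
      rw [hins, Finset.card_insert_of_notMem (by simp)]
      push_cast
      congr 3
      ext k
      simp
  -- If there is a short covering inequality at all, then the one of `d - 2` is short.
  have hshort : (J.filter fun k => (S k).card = 1).Nonempty ↔
      (w = 2 ∨ v ⟨d - 2, by omega⟩ = 0) := by
    constructor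
    · rintro ⟨k, hk⟩
      obtain ⟨hkJ, hc⟩ := Finset.mem_filter.1 hk
      have h2k := (hcard1 k hkJ).1 hc
      rcases (hJmem k).1 hkJ with h | h
      · exact Or.inl (hm2iff.1 (le_antisymm hm2 (h ▸ h2k)))
      · right
        rw [hv0]
        intro hmem
        have hkn := Fin.lt_def.1 (hJn k hkJ)
        have hk2 : k ≤ ⟨d - 2, by omega⟩ := Fin.le_def.2 (by
          simp only [hn_def] at hkn
          show k.val ≤ d - 2
          omega)
        have hlt : k < ⟨d - 2, by omega⟩ := lt_of_le_of_ne hk2 fun h' => h.2 (h' ▸ hmem)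
        have h1 : (⟨d - 2, by omega⟩ : Fin d) ∈ S k := (hSmem k _).2 ⟨hmem, hlt⟩
        have h3 : (⟨d - 2, by omega⟩ : Fin d) ≠ n := by
          intro h'
          have := congrArg Fin.val h'
          simp only [hn_def] at this
          omega
        have := Finset.one_lt_card.2 ⟨_, h1, n, hn k hkJ, h3⟩
        omega
    · intro h
      by_cases hw' : w = 2
      · have hmJ : m ∈ J := (hJmem m).2 (Or.inl rfl)
        exact ⟨m, Finset.mem_filter.2 ⟨hmJ, (hcard1 m hmJ).2 (hm2iff.2 hw').ge⟩⟩
      · have h0 := (hv0 _).1 (h.resolve_left hw')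
        have h2le : sig 2 ≤ ⟨d - 2, by omega⟩ := Fin.le_def.2 (by
          have := Fin.lt_def.1 h2n
          simp only [hn_def] at this
          show (sig 2).val ≤ d - 2
          omega)
        have hlt : m < sig 2 := lt_of_le_of_ne hm2 fun h' => hw' (hm2iff.1 h')
        have hmem : (⟨d - 2, by omega⟩ : Fin d) ∈ J :=
          (hJmem _).2 (Or.inr ⟨hlt.trans_le h2le, h0⟩)
        exact ⟨_, Finset.mem_filter.2 ⟨hmem, (hcard1 _ hmem).2 h2le⟩⟩
  rw [hlong, ← hw]
  simp only [hshort]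
  by_cases hw' : w = 2
  · simp [hw']; ring
  · by_cases h0 : v ⟨d - 2, by omega⟩ = 0
    · simp [hw', h0]; ring
    · simp [hw', h0]; ring
end

section
/- For every positive integer d and every v ∈ {0,1}^d with v ≠ 0, the average vertex degree of the graph of the revlex-initial 0/1-polytope P(v) is at most d + 4; that is, if E is the number of edges (1-dimensional faces) of P(v) and n = |X(v)| is its number of vertices, then 2·E ≤ (d + 4)·n. -/
/-!
An edge of `P(v)` is the convex hull of exactly two vertices `x ≠ y`, and if `x' + y' = x + y` with
`x', y' ∈ X(v)`, then `x' ∈ {x, y}`: the midpoint of `[x, y]` is also that of `[x', y']`. Applied to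
the points `x', y'` obtained from `x, y` by exchanging a single coordinate, this leaves two kinds of
edges. Write `x ≺ y`, let `i` be the largest index where `x` and `y` differ and let `j` be the
largest index where `y` and `v` differ.

* If `i < j`, then `x` and `y` differ only in `i`. Such an edge is given by the pair `(y, i)` with
  `y i = 1`. For each `i`, switching off the coordinate `i` injects `{y ∈ X(v) | y i = 1}` into
  `{y ∈ X(v) | y i = 0}`, so twice the number of such pairs is at most `d * |X(v)|`.
* If `j < i`, then `y` agrees with `v` above `j` and with `x` below `j`, so that the edge is given by
  the pair `(x, j)`; moreover `x l = 1` for all `l` strictly between `j` and `i` with `v l = 1`. Here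
  `i` depends only on `x`. Among these pairs, those with `x j = 0` are determined by `x`, since `j` is
  the largest index below `i` with `v j = 1` and `x j = 0`; hence there are at most `|X(v)|` of them.
  Switching off the coordinate `j` injects the pairs with `x j = 1` into those with `x j = 0`. So
  there are at most `2 * |X(v)|` pairs in total.

Adding up, twice the number of edges is at most `d * |X(v)| + 4 * |X(v)|`.
-/

open Finset

/-! ### Reverse-lexicographic order and coordinate changes -/

lemma zeroOne_finite (d : ℕ) : (ZeroOne d).Finite := by
  have h : (Set.univ.pi fun _ : Fin d => ({0, 1} : Set ℝ)).Finite :=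
    Set.Finite.pi fun _ => Set.toFinite _
  refine h.subset fun x hx i _ => ?_
  simpa using hx i

lemma xset_finite {d : ℕ} (v : Fin d → ℝ) : (Xset v).Finite :=
  (zeroOne_finite d).subset fun _ hx => hx.1

lemma ZeroOne.update {d : ℕ} {x : Fin d → ℝ} (hx : x ∈ ZeroOne d) (l : Fin d) {a : ℝ}
    (ha : a = 0 ∨ a = 1) : Function.update x l a ∈ ZeroOne d := by
  intro k
  by_cases h : k = l
  · subst h; simpa using ha
  · simpa [h] using hx k

/-- For `0/1`-vectors, an inequality of coordinates determines both of them. -/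
lemma ZeroOne.eq_of_lt {d : ℕ} {x y : Fin d → ℝ} (hx : x ∈ ZeroOne d) (hy : y ∈ ZeroOne d)
    {i : Fin d} (h : x i < y i) : x i = 0 ∧ y i = 1 := by
  rcases hx i with h1 | h1 <;> rcases hy i with h2 | h2 <;> rw [h1, h2] at h <;> norm_num at h
  exact ⟨h1, h2⟩

lemma rlexLt_total {d : ℕ} {x y : Fin d → ℝ} (h : x ≠ y) : RlexLt x y ∨ RlexLt y x := by
  classical
  have hne : (univ.filter fun i => x i ≠ y i).Nonempty := by
    obtain ⟨i, hi⟩ := Function.ne_iff.1 h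
    exact ⟨i, by simpa using hi⟩
  set m := (univ.filter fun i => x i ≠ y i).max' hne with hm
  have h1 : x m ≠ y m := by simpa using Finset.max'_mem _ hne
  have h2 : ∀ i, m < i → x i = y i := by
    intro i hi
    by_contra hc
    exact absurd (Finset.le_max' (univ.filter fun i => x i ≠ y i) i (by simpa using hc))
      (not_le.2 hi)
  rcases lt_or_gt_of_ne h1 with h3 | h3
  · exact .inl ⟨m, h3, h2⟩
  · exact .inr ⟨m, h3, fun i hi => (h2 i hi).symm⟩

/-- Switching off a coordinate of a point of `X(v)` gives a point of `X(v)`. -/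
lemma Xset.update_zero {d : ℕ} {v x : Fin d → ℝ} (hv : v ∈ ZeroOne d) (hx : x ∈ Xset v)
    (l : Fin d) : Function.update x l 0 ∈ Xset v := by
  refine ⟨ZeroOne.update hx.1 l (.inl rfl), ?_⟩
  obtain ⟨m, hm, hm'⟩ := hx.2
  obtain ⟨hxm, hvm⟩ := ZeroOne.eq_of_lt hx.1 hv hm
  by_cases hl : m < l ∧ x l = 1
  · refine ⟨l, ?_, fun i hi => ?_⟩
    · rw [Function.update_self, ← hm' l hl.1, hl.2]; norm_num
    · rw [Function.update_of_ne hi.ne']; exact hm' i (hl.1.trans hi)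
  · refine ⟨m, ?_, fun i hi => ?_⟩
    · by_cases h : m = l
      · subst h; rw [Function.update_self, hvm]; norm_num
      · rwa [Function.update_of_ne h]
    · by_cases h : i = l
      · subst h
        rw [Function.update_self, ← hm' i hi]
        rcases hx.1 i with h0 | h0
        · exact h0.symm
        · exact absurd ⟨hi, h0⟩ hl
      · rw [Function.update_of_ne h]; exact hm' i hi

/-! ### Edges as pairs of vertices -/

/-- The condition that no other pair of points of `X(v)` has the same midpoint as `x, y`. -/
def Rigid {d : ℕ} (v x y : Fin d → ℝ) : Prop :=
  ∀ x' ∈ Xset v, ∀ y' ∈ Xset v, x' + y' = x + y → x' = x ∨ x' = y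

lemma Rigid.symm {d : ℕ} {v x y : Fin d → ℝ} (h : Rigid v x y) : Rigid v y x :=
  fun x' hx y' hy e => (h x' hx y' hy (e.trans (add_comm _ _))).symm

/-- A face of a convex hull is the convex hull of the generators it contains. -/
lemma face_eq_convexHull {d : ℕ} {X F : Set (Fin d → ℝ)} (h : IsFaceOf (convexHull ℝ X) F) :
    F = convexHull ℝ (F ∩ X) := by
  refine Set.Subset.antisymm ?_ (convexHull_min Set.inter_subset_left h.1)
  have key : convexHull ℝ X ⊆
      {p | p ∈ convexHull ℝ X ∧ (p ∈ F → p ∈ convexHull ℝ (F ∩ X))} := by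
    refine convexHull_min
      (fun x hx => ⟨subset_convexHull ℝ X hx, fun hF => subset_convexHull ℝ _ ⟨hF, hx⟩⟩) ?_
    rw [convex_iff_forall_pos]
    intro p hp q hq a b ha hb hab
    refine ⟨convex_convexHull ℝ X hp.1 hq.1 ha.le hb.le hab, fun hF => ?_⟩
    have hmem : a • p + b • q ∈ openSegment ℝ p q := ⟨a, b, ha, hb, hab, rfl⟩
    exact convex_convexHull ℝ (F ∩ X)
      (hp.2 (h.2.left_mem_of_mem_openSegment hp.1 hq.1 hF hmem))
      (hq.2 (h.2.right_mem_of_mem_openSegment hp.1 hq.1 hF hmem)) ha.le hb.le hab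
  exact fun p hp => (key (h.2.subset hp)).2 hp

lemma edge_eq_convexHull_pair {d : ℕ} {v : Fin d → ℝ} {F : Set (Fin d → ℝ)}
    (hF : IsFaceOf (Pset v) F) (hdim : adim F = 1) :
    ∃ x ∈ Xset v, ∃ y ∈ Xset v, x ≠ y ∧ Rigid v x y ∧ F = convexHull ℝ {x, y} := by
  have hhull := face_eq_convexHull hF
  have hdim' : Module.finrank ℝ (affineSpan ℝ (F ∩ Xset v)).direction = 1 := by
    rw [← affineSpan_convexHull, ← hhull]; exact hdim
  have hnt : (F ∩ Xset v).Nontrivial := by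
    by_contra hc
    rw [Set.not_nontrivial_iff] at hc
    rw [direction_affineSpan, vectorSpan_of_subsingleton ℝ hc, finrank_bot] at hdim'
    exact zero_ne_one hdim'
  obtain ⟨x, hx, y, hy, hxy⟩ := hnt
  -- Three distinct `0/1`-vectors are never collinear.
  have hpair : F ∩ Xset v = {x, y} := by
    refine Set.Subset.antisymm (fun z hz => ?_) (by
      rintro z (rfl | rfl)
      · exact hx
      · exact hy)
    have mem : ∀ w ∈ F ∩ Xset v, w - x ∈ (affineSpan ℝ (F ∩ Xset v)).direction := fun w hw =>
      AffineSubspace.vsub_mem_direction (subset_affineSpan ℝ _ hw) (subset_affineSpan ℝ _ hx)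
    obtain ⟨c, hc⟩ := (finrank_eq_one_iff_of_nonzero'
      (⟨y - x, mem y hy⟩ : (affineSpan ℝ (F ∩ Xset v)).direction)
      (by simpa [Subtype.ext_iff, sub_eq_zero] using hxy.symm)).1 hdim' ⟨z - x, mem z hz⟩
    have hc' : c • (y - x) = z - x := congrArg Subtype.val hc
    obtain ⟨i, hi⟩ := Function.ne_iff.1 hxy
    have hci : c * (y i - x i) = z i - x i := congrFun hc' i
    have h01 : c = 0 ∨ c = 1 := by
      rcases hx.2.1 i with h1 | h1 <;> rcases hy.2.1 i with h2 | h2 <;>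
        rcases hz.2.1 i with h3 | h3 <;> rw [h1, h2, h3] at hci <;>
        first
        | exact absurd (h1.trans h2.symm) hi
        | (left; linarith)
        | (right; linarith)
    rcases h01 with rfl | rfl
    · left; rw [zero_smul] at hc'; exact sub_eq_zero.1 hc'.symm
    · right; rw [one_smul] at hc'; exact (sub_left_injective hc').symm
  refine ⟨x, hx.2, y, hy.2, hxy, fun x' hx' y' hy' hsum => ?_, by rw [← hpair]; exact hhull⟩
  have hmid : (1 / 2 : ℝ) • x + (1 / 2 : ℝ) • y ∈ F :=
    hF.1 hx.1 hy.1 (by norm_num) (by norm_num) (by norm_num)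
  have hx'F : x' ∈ F := by
    refine hF.2.left_mem_of_mem_openSegment (subset_convexHull ℝ _ hx')
      (subset_convexHull ℝ _ hy') hmid
      ⟨1 / 2, 1 / 2, by norm_num, by norm_num, by norm_num, ?_⟩
    rw [← smul_add, ← smul_add, hsum]
  have : x' ∈ F ∩ Xset v := ⟨hx'F, hx'⟩
  rwa [hpair] at this

/-- Exchanging the coordinate `l` of `x` and `y` cannot stay inside `X(v)` when `x, y` is rigid
and these points differ in `l` and in another coordinate `i`. -/
lemma Rigid.swap {d : ℕ} {v x y : Fin d → ℝ} (h : Rigid v x y) (hx : x ∈ ZeroOne d)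
    (hy : y ∈ ZeroOne d) {i l : Fin d} (hil : l ≠ i) (hi : x i ≠ y i) (hl : x l ≠ y l)
    (h1 : RlexLt (Function.update x l (y l)) v) (h2 : RlexLt (Function.update y l (x l)) v) :
    False := by
  rcases h _ ⟨ZeroOne.update hx l (hy l), h1⟩ _ ⟨ZeroOne.update hy l (hx l), h2⟩ (by
    ext k
    by_cases hk : k = l
    · subst hk; simp [add_comm]
    · simp [hk]) with e | e
  · have := congrFun e l
    rw [Function.update_self] at this
    exact hl this.symm
  · have := congrFun e i
    rw [Function.update_of_ne hil.symm] at this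
    exact hi this

/-! ### The two kinds of edges -/

/-- The pairs encoding edges between vertices that differ in a single coordinate `p.2`, where
`p.1` is the vertex with a one there. -/
def DownPairs {d : ℕ} (v : Fin d → ℝ) : Set ((Fin d → ℝ) × Fin d) :=
  {p | p.1 ∈ Xset v ∧ p.1 p.2 = 1}

/-- The pairs `(x, j)` that may encode an edge from `x` to `crossPoint v x j`: if `i` is the largest
index where `x` and `v` differ, then `v j = 1`, `j < i`, and `x l = 1` for all `l` strictly between
`j` and `i` with `v l = 1`. -/
def CrossPairs {d : ℕ} (v : Fin d → ℝ) : Set ((Fin d → ℝ) × Fin d) :=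
  {p | p.1 ∈ ZeroOne d ∧ v p.2 = 1 ∧ ∃ i, p.2 < i ∧ p.1 i = 0 ∧ v i = 1 ∧
    (∀ k, i < k → p.1 k = v k) ∧ ∀ l, p.2 < l → l < i → v l = 1 → p.1 l = 1}

/-- The point that agrees with `x` below `j`, is zero at `j`, and agrees with `v` above `j`. -/
def crossPoint {d : ℕ} (v x : Fin d → ℝ) (j : Fin d) : Fin d → ℝ :=
  fun k => if k < j then x k else if k = j then 0 else v k

lemma rigid_classification {d : ℕ} {v x y : Fin d → ℝ} (hv : v ∈ ZeroOne d) (hx : x ∈ ZeroOne d)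
    (hy : y ∈ Xset v) (hxy : RlexLt x y) (h : Rigid v x y) :
    (∃ i, (y, i) ∈ DownPairs v ∧ x = Function.update y i 0) ∨
      ∃ j, (x, j) ∈ CrossPairs v ∧ y = crossPoint v x j := by
  obtain ⟨i, hi, hi'⟩ := hxy
  obtain ⟨hyZ, j, hj, hj'⟩ := hy
  obtain ⟨hxi, hyi⟩ := ZeroOne.eq_of_lt hx hyZ hi
  obtain ⟨hyj, hvj⟩ := ZeroOne.eq_of_lt hyZ hv hj
  rcases lt_trichotomy i j with hij | rfl | hij
  · left
    refine ⟨i, ⟨⟨hyZ, j, hj, hj'⟩, hyi⟩, ?_⟩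
    ext l
    by_cases hl : l = i
    · subst hl; rw [Function.update_self, hxi]
    rw [Function.update_of_ne hl]
    by_contra hne
    have hli : l < i := by
      rcases lt_trichotomy l i with h1 | h1 | h1
      · exact h1
      · exact absurd h1 hl
      · exact absurd (hi' l h1) hne
    have hlj := hli.trans hij
    refine h.swap hx hyZ hl hi.ne hne ⟨j, ?_, fun k hk => ?_⟩ ⟨j, ?_, fun k hk => ?_⟩
    · rwa [Function.update_of_ne hlj.ne', hi' j hij]
    · rw [Function.update_of_ne (hlj.trans hk).ne', hi' k (hij.trans hk), hj' k hk]
    · rwa [Function.update_of_ne hlj.ne']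
    · rw [Function.update_of_ne (hlj.trans hk).ne', hj' k hk]
  · rw [hyi] at hyj
    exact absurd hyj one_ne_zero
  · right
    have hvi : v i = 1 := by rw [← hj' i hij, hyi]
    -- Exchanging a coordinate below `i` always keeps `x` inside `X(v)`.
    have hxswap : ∀ l, l < i → RlexLt (Function.update x l (y l)) v := fun l hl =>
      ⟨i, by rw [Function.update_of_ne hl.ne', hxi, hvi]; norm_num, fun k hk => by
        rw [Function.update_of_ne (hl.trans hk).ne', hi' k hk, hj' k (hij.trans hk)]⟩
    refine ⟨j, ⟨hx, hvj, i, hij, hxi, hvi, fun k hk => ?_, fun l hjl hli hvl => ?_⟩, ?_⟩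
    · exact (hi' k hk).trans (hj' k (hij.trans hk))
    · by_contra hne
      have hxl : x l = 0 := (hx l).resolve_right hne
      have hyl : y l = 1 := by rw [hj' l hjl, hvl]
      refine h.swap hx hyZ hli.ne hi.ne (by rw [hyl]; exact hne) (hxswap l hli)
        ⟨l, ?_, fun k hk => ?_⟩
      · rw [Function.update_self, hxl, hvl]; norm_num
      · rw [Function.update_of_ne hk.ne', hj' k (hjl.trans hk)]
    · ext l
      unfold crossPoint
      rcases lt_trichotomy l j with hl | rfl | hl
      · rw [if_pos hl]
        by_contra hne
        refine h.swap hx hyZ (hl.trans hij).ne hi.ne (Ne.symm hne) (hxswap l (hl.trans hij))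
          ⟨j, ?_, fun k hk => ?_⟩
        · rwa [Function.update_of_ne hl.ne']
        · rw [Function.update_of_ne (hl.trans hk).ne', hj' k hk]
      · simpa using hyj
      · rw [if_neg hl.not_gt, if_neg hl.ne']
        exact hj' l hl

/-! ### Counting the pairs -/

lemma pairs_finite {d : ℕ} {A : Set ((Fin d → ℝ) × Fin d)} (h : ∀ p ∈ A, p.1 ∈ ZeroOne d) :
    A.Finite :=
  ((zeroOne_finite d).prod Set.finite_univ).subset fun p hp => ⟨h p hp, trivial⟩

lemma crossPairs_fst_mem {d : ℕ} {v : Fin d → ℝ} {p : (Fin d → ℝ) × Fin d}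
    (h : p ∈ CrossPairs v) : p.1 ∈ Xset v := by
  obtain ⟨h0, -, i, -, hxi, hvi, hk, -⟩ := h
  exact ⟨h0, i, by rw [hxi, hvi]; norm_num, hk⟩

/-- Switching off the coordinate `p.2` of `p.1` is injective on the pairs where it is on. -/
lemma switch_injOn {d : ℕ} {A : Set ((Fin d → ℝ) × Fin d)} (h : ∀ p ∈ A, p.1 p.2 = 1) :
    Set.InjOn (fun p : (Fin d → ℝ) × Fin d => (Function.update p.1 p.2 0, p.2)) A := by
  rintro ⟨x, j⟩ hx ⟨x', j'⟩ hx' e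
  obtain ⟨e1, e2⟩ := Prod.ext_iff.1 e
  dsimp only at e1 e2
  subst e2
  have h1 : x j = 1 := h _ hx
  have h2 : x' j = 1 := h _ hx'
  refine Prod.ext (funext fun k => ?_) rfl
  by_cases hk : k = j
  · subst hk; exact h1.trans h2.symm
  · have := congrFun e1 k
    rwa [Function.update_of_ne hk, Function.update_of_ne hk] at this

lemma two_mul_downPairs {d : ℕ} {v : Fin d → ℝ} (hv : v ∈ ZeroOne d) :
    2 * (DownPairs v).ncard ≤ d * (Xset v).ncard := by
  set Z : Set ((Fin d → ℝ) × Fin d) := {p | p.1 ∈ Xset v ∧ p.1 p.2 = 0} with hZ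
  have hZf : Z.Finite := pairs_finite fun p hp => hp.1.1
  have hDf : (DownPairs v).Finite := pairs_finite fun p hp => hp.1.1
  have h1 : (DownPairs v).ncard ≤ Z.ncard :=
    Set.ncard_le_ncard_of_injOn _
      (fun p hp => ⟨Xset.update_zero hv hp.1 p.2, Function.update_self ..⟩)
      (switch_injOn fun p hp => hp.2) hZf
  have hdisj : Disjoint (DownPairs v) Z := by
    rw [Set.disjoint_left]
    intro p hp hp'
    exact one_ne_zero (hp.2.symm.trans hp'.2)
  have h2 : (DownPairs v ∪ Z).ncard ≤ (Xset v ×ˢ (Set.univ : Set (Fin d))).ncard := by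
    refine Set.ncard_le_ncard ?_ ((xset_finite v).prod Set.finite_univ)
    rintro p (hp | hp) <;> exact ⟨hp.1, trivial⟩
  rw [Set.ncard_union_eq hdisj hDf hZf, Set.ncard_prod, Set.ncard_univ, Nat.card_fin,
    mul_comm] at h2
  omega

lemma crossPairs_le {d : ℕ} (v : Fin d → ℝ) : (CrossPairs v).ncard ≤ 2 * (Xset v).ncard := by
  set A : Set ((Fin d → ℝ) × Fin d) := {p | p ∈ CrossPairs v ∧ p.1 p.2 = 0} with hA
  set B : Set ((Fin d → ℝ) × Fin d) := {p | p ∈ CrossPairs v ∧ p.1 p.2 = 1} with hB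
  have hAf : A.Finite := pairs_finite fun p hp => hp.1.1
  have hcover : CrossPairs v ⊆ A ∪ B := fun p hp =>
    (hp.1 p.2).imp (fun h => ⟨hp, h⟩) (fun h => ⟨hp, h⟩)
  have hBA : B.ncard ≤ A.ncard := by
    refine Set.ncard_le_ncard_of_injOn _ ?_ (switch_injOn fun p hp => hp.2) hAf
    rintro ⟨x, j⟩ ⟨⟨h0, hvj, i, hji, hxi, hvi, hk, hl⟩, -⟩
    refine ⟨⟨ZeroOne.update h0 j (.inl rfl), hvj, i, hji, ?_, hvi, fun k hik => ?_,
      fun l hjl hli hvl => ?_⟩, Function.update_self ..⟩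
    · simpa [Function.update_of_ne hji.ne'] using hxi
    · simpa [Function.update_of_ne (hji.trans hik).ne'] using hk k hik
    · simpa [Function.update_of_ne hjl.ne'] using hl l hjl hli hvl
  have hAX : A.ncard ≤ (Xset v).ncard := by
    refine Set.ncard_le_ncard_of_injOn Prod.fst (fun p hp => crossPairs_fst_mem hp.1) ?_
      (xset_finite v)
    rintro ⟨x, j⟩ ⟨⟨-, hvj, i, hji, hxi, hvi, hk, hl⟩, hxj⟩ ⟨x', j'⟩
      ⟨⟨-, hvj', i', hji', hxi', hvi', hk', hl'⟩, hxj'⟩ e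
    dsimp only at *
    subst e
    -- Both `i` and `i'` are the largest index where `x` and `v` differ.
    have hii : i = i' := by
      rcases lt_trichotomy i i' with h | h | h
      · have := hk i' h
        rw [hxi', hvi'] at this
        exact absurd this zero_ne_one
      · exact h
      · have := hk' i h
        rw [hxi, hvi] at this
        exact absurd this zero_ne_one
    subst hii
    rcases lt_trichotomy j j' with h | h | h
    · have := hl j' h hji' hvj'
      rw [hxj'] at this
      exact absurd this zero_ne_one
    · rw [h]
    · have := hl' j h hji hvj
      rw [hxj] at this
      exact absurd this zero_ne_one
  have h1 : (CrossPairs v).ncard ≤ (A ∪ B).ncard :=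
    Set.ncard_le_ncard hcover (hAf.union (pairs_finite fun p hp => hp.1.1))
  have h2 := Set.ncard_union_le A B
  omega


/-- the average vertex degree of the graph of `P(v)` is at most
`d + 4`: twice the number of edges is at most `(d+4)` times the number of vertices. -/
theorem stmt13 (d : ℕ) (hd : 0 < d) (v : Fin d → ℝ) (hv : v ∈ ZeroOne d) (hv0 : v ≠ 0) :
    2 * Set.ncard {F : Set (Fin d → ℝ) | IsFaceOf (Pset v) F ∧ adim F = 1}
      ≤ (d + 4) * (Xset v).ncard := by
  have hDf : (DownPairs v).Finite := pairs_finite fun p hp => hp.1.1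
  have hCf : (CrossPairs v).Finite := pairs_finite fun p hp => hp.1
  have hsub : {F : Set (Fin d → ℝ) | IsFaceOf (Pset v) F ∧ adim F = 1} ⊆
      (fun p : (Fin d → ℝ) × Fin d => convexHull ℝ {Function.update p.1 p.2 0, p.1}) ''
          DownPairs v ∪
        (fun p : (Fin d → ℝ) × Fin d => convexHull ℝ {p.1, crossPoint v p.1 p.2}) ''
          CrossPairs v := by
    rintro F ⟨hF, hdim⟩
    obtain ⟨x, hx, y, hy, hne, hrig, rfl⟩ := edge_eq_convexHull_pair hF hdim
    clear hF hdim
    wlog hlt : RlexLt x y generalizing x y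
    · rw [Set.pair_comm]
      exact this y hy x hx hne.symm hrig.symm ((rlexLt_total hne).resolve_left hlt)
    rcases rigid_classification hv hx.1 hy hlt hrig with ⟨i, hi, rfl⟩ | ⟨j, hj, rfl⟩
    · exact .inl ⟨_, hi, rfl⟩
    · exact .inr ⟨_, hj, rfl⟩
  have h1 := Set.ncard_le_ncard hsub ((hDf.image _).union (hCf.image _))
  have h2 := h1.trans (Set.ncard_union_le _ _)
  have h3 := Set.ncard_image_le (f := fun p : (Fin d → ℝ) × Fin d =>
    convexHull ℝ {Function.update p.1 p.2 0, p.1}) hDf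
  have h4 := Set.ncard_image_le (f := fun p : (Fin d → ℝ) × Fin d =>
    convexHull ℝ {p.1, crossPoint v p.1 p.2}) hCf
  have h5 := two_mul_downPairs hv
  have h6 := crossPairs_le v
  rw [add_mul]
  omega
end

section
/- For all positive integers d and n with d + 1 ≤ n ≤ 2^d, there exists a 0/1-polytope P ⊆ ℝ^d of dimension d with exactly n vertices such that the number of facets of P (its (d−1)-dimensional faces) is at most d + 2·log₂ n. -/
/-!
The vertex set is a revlex-initial subset of a cube, followed by iterated pyramids.

*Revlex-initial sets.* Ordering 0/1-vectors by the binary number they represent (coordinate `0`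
being the leading digit), the hull of the first `n` vectors is the unit cube intersected with one
cover inequality `x i ≤ ∑ (1 - x j)` for each zero digit `i` of `w = n - 1`, the sum being over the
one-digits `j` more significant than `i`. This goes by induction on the leading digit of `w`: a zero
forces `x 0 = 0`, and a one yields the hull of a full cube in the slice `x 0 = 0` and of the smaller
polytope in the slice `x 0 = 1` (`cover_cons_one`). In the latter case a point `(t, y)` satisfying
the inequalities is split as `y = min y (1 - t) + max 0 (y - (1 - t))`; the two summands, rescaled,
lie in the cube and in the smaller polytope.

*Counting inequalities.* Besides the `d` conditions `x i ≥ 0`, a polytope with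
`2 ^ (d - 1) + 2 ≤ n ≤ 2 ^ d` vertices obtained in this way needs `d` conditions `x i ≤ 1` and at
most `d - 2` cover inequalities, hence at most `2 * (d - 1) ≤ 2 * log₂ n` further ones. If
`n ≤ 2 ^ (d - 1) + 1`, a pyramid over a polytope of dimension `d - 1` with `n - 1` vertices is
taken: apart from nonnegativity it needs no more inequalities than its base (`IsCornerPoly.pyramid`).

*Counting facets.* A facet of a full-dimensional polyhedron is the locus where one of the defining
inequalities is tight (`facet_mem_range`): at a relative interior point of the facet some inequality
is tight, for otherwise extremality would force the facet to be everything; that inequality is then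
tight on the whole facet, and equality follows from comparing dimensions and extremality again.
In dimension one the empty face also satisfies the dimension condition, and is counted separately.
-/

open Finset

/-- A polytope of "corner" shape: there are `n` points of `{0,1}^d`, among them the origin and all
unit vectors, whose convex hull is cut out of the nonnegative orthant by at most `k` (and at least
one) inequalities `A c · x ≤ β c` with positive right-hand side. -/
def IsCornerPoly (d n k : ℕ) : Prop :=
  ∃ (V : Finset (Fin d → ℝ)) (ι : Type) (_ : Fintype ι) (A : ι → Fin d → ℝ) (β : ι → ℝ),
    (V : Set (Fin d → ℝ)) ⊆ ZeroOne d ∧ 0 ∈ V ∧ (∀ i, Pi.single i 1 ∈ V) ∧ V.card = n ∧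
    Fintype.card ι ≤ k ∧ Nonempty ι ∧ (∀ c, 0 < β c) ∧
    ∀ x, x ∈ convexHull ℝ (V : Set (Fin d → ℝ)) ↔
      (∀ i, 0 ≤ x i) ∧ ∀ c, ∑ i, A c i * x i ≤ β c

/-- `n` points of `{0,1}^d`, including the origin, whose convex hull is cut out of the unit cube by
at most `z` cover inequalities `x i ≤ ∑ j ∈ J, (1 - x j)`. -/
def IsCover (d n z : ℕ) : Prop :=
  ∃ (V : Finset (Fin d → ℝ)) (ι : Type) (_ : Fintype ι) (i : ι → Fin d) (J : ι → Finset (Fin d)),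
    (V : Set (Fin d → ℝ)) ⊆ ZeroOne d ∧ 0 ∈ V ∧ V.card = n ∧ Fintype.card ι ≤ z ∧
    ∀ x, x ∈ convexHull ℝ (V : Set (Fin d → ℝ)) ↔
      (∀ k, 0 ≤ x k ∧ x k ≤ 1) ∧ ∀ c, x (i c) ≤ ∑ j ∈ J c, (1 - x j)

/-- The vertices of the unit cube. -/
noncomputable def cubeVerts (d : ℕ) : Finset (Fin d → ℝ) :=
  Fintype.piFinset fun _ => {0, 1}

lemma mem_cubeVerts {d : ℕ} (x : Fin d → ℝ) : x ∈ cubeVerts d ↔ x ∈ ZeroOne d := by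
  simp [cubeVerts, ZeroOne]

lemma card_cubeVerts (d : ℕ) : (cubeVerts d).card = 2 ^ d := by
  simp [cubeVerts, Fintype.card_piFinset]

lemma mem_convexHull_cubeVerts {d : ℕ} (x : Fin d → ℝ) :
    x ∈ convexHull ℝ (cubeVerts d : Set (Fin d → ℝ)) ↔ ∀ k, 0 ≤ x k ∧ x k ≤ 1 := by
  simp [cubeVerts, Fintype.coe_piFinset, convexHull_pi, convexHull_pair, segment_eq_Icc,
    Pi.le_def, forall_and]

lemma mem_Icc_of_mem_convexHull {d : ℕ} {V : Set (Fin d → ℝ)} (hV : V ⊆ ZeroOne d)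
    {x : Fin d → ℝ} (hx : x ∈ convexHull ℝ V) : ∀ k, 0 ≤ x k ∧ x k ≤ 1 :=
  (mem_convexHull_cubeVerts x).1
    (convexHull_mono (fun _ hy => (mem_cubeVerts _).2 (hV hy)) hx)

lemma cons_mem_zeroOne {d : ℕ} {t : ℝ} {x : Fin d → ℝ} (ht : t = 0 ∨ t = 1) (hx : x ∈ ZeroOne d) :
    (Fin.cons t x : Fin (d + 1) → ℝ) ∈ ZeroOne (d + 1) := by
  intro i
  refine Fin.cases ?_ (fun j => ?_) i
  · simpa using ht
  · simpa using hx j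

lemma cons_zero_zero {d : ℕ} : (Fin.cons 0 0 : Fin (d + 1) → ℝ) = 0 := by
  ext i
  refine Fin.cases ?_ (fun j => ?_) i <;> simp

/-- Placing a polytope in a slice `x 0 = t` preserves convex hulls. -/
lemma cons_mem_convexHull {d : ℕ} {V : Set (Fin d → ℝ)} {W : Set (Fin (d + 1) → ℝ)} (t : ℝ)
    (h : ∀ v ∈ V, (Fin.cons t v : Fin (d + 1) → ℝ) ∈ convexHull ℝ W) {x : Fin d → ℝ}
    (hx : x ∈ convexHull ℝ V) : (Fin.cons t x : Fin (d + 1) → ℝ) ∈ convexHull ℝ W := by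
  have hc : Convex ℝ {u : Fin d → ℝ | (Fin.cons t u : Fin (d + 1) → ℝ) ∈ convexHull ℝ W} := by
    intro u hu v hv a b ha hb hab
    have := convex_convexHull ℝ W hu hv ha hb hab
    rw [Set.mem_ofPred_eq]
    convert this using 1
    ext i
    refine Fin.cases ?_ (fun j => ?_) i
    · simp [← add_mul, hab]
    · simp
  exact convexHull_min (fun v hv => h v hv) hc hx

/-- Combining a point of the slice `x 0 = 0` with one of the slice `x 0 = 1`. -/
lemma cons_combo_mem {d : ℕ} {W : Set (Fin (d + 1) → ℝ)} {t : ℝ} {y u v : Fin d → ℝ}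
    (ht : 0 ≤ t) (ht' : t ≤ 1)
    (hu : (Fin.cons 0 u : Fin (d + 1) → ℝ) ∈ convexHull ℝ W)
    (hv : (Fin.cons 1 v : Fin (d + 1) → ℝ) ∈ convexHull ℝ W)
    (h : ∀ k, y k = (1 - t) * u k + t * v k) :
    (Fin.cons t y : Fin (d + 1) → ℝ) ∈ convexHull ℝ W := by
  have := convex_convexHull ℝ W hu hv (sub_nonneg.2 ht') ht (by ring)
  convert this using 1
  ext i
  refine Fin.cases ?_ (fun j => ?_) i
  · simp
  · simp [h]

lemma convex_cover {d : ℕ} {ι : Type} (i : ι → Fin d) (J : ι → Finset (Fin d)) :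
    Convex ℝ {x : Fin d → ℝ |
      (∀ k, 0 ≤ x k ∧ x k ≤ 1) ∧ ∀ c, x (i c) ≤ ∑ j ∈ J c, (1 - x j)} := by
  rintro x ⟨hx, hx'⟩ y ⟨hy, hy'⟩ a b ha hb hab
  refine ⟨fun k => ?_, fun c => ?_⟩
  · have h1 := hx k
    have h2 := hy k
    simp only [Pi.add_apply, Pi.smul_apply, smul_eq_mul]
    constructor <;> nlinarith
  · have h1 := mul_le_mul_of_nonneg_left (hx' c) ha
    have h2 := mul_le_mul_of_nonneg_left (hy' c) hb
    have h3 : ∑ j ∈ J c, (1 - (a • x + b • y) j)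
        = a * ∑ j ∈ J c, (1 - x j) + b * ∑ j ∈ J c, (1 - y j) := by
      rw [Finset.mul_sum, Finset.mul_sum, ← Finset.sum_add_distrib]
      refine Finset.sum_congr rfl fun j _ => ?_
      simp only [Pi.add_apply, Pi.smul_apply, smul_eq_mul]
      linear_combination -hab
    rw [h3]
    simp only [Pi.add_apply, Pi.smul_apply, smul_eq_mul]
    linarith

lemma convex_corner {d : ℕ} {ι : Type} (A : ι → Fin d → ℝ) (β : ι → ℝ) :
    Convex ℝ {x : Fin d → ℝ | (∀ k, 0 ≤ x k) ∧ ∀ c, ∑ k, A c k * x k ≤ β c} := by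
  rintro x ⟨hx, hx'⟩ y ⟨hy, hy'⟩ a b ha hb hab
  refine ⟨fun k => ?_, fun c => ?_⟩
  · have h1 := hx k
    have h2 := hy k
    simp only [Pi.add_apply, Pi.smul_apply, smul_eq_mul]
    positivity
  · have h1 := mul_le_mul_of_nonneg_left (hx' c) ha
    have h2 := mul_le_mul_of_nonneg_left (hy' c) hb
    have h3 : ∑ k, A c k * (a • x + b • y) k
        = a * ∑ k, A c k * x k + b * ∑ k, A c k * y k := by
      rw [Finset.mul_sum, Finset.mul_sum, ← Finset.sum_add_distrib]
      refine Finset.sum_congr rfl fun j _ => ?_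
      simp only [Pi.add_apply, Pi.smul_apply, smul_eq_mul]
      ring
    have h4 : β c = a * β c + b * β c := by rw [← add_mul, hab, one_mul]
    rw [h3]
    linarith

/-! ### Reverse-lexicographically initial sets -/

/-- A leading zero: the new coordinate `x 0` is forced to vanish by the cover inequality with empty
right-hand side. -/
lemma IsCover.cons_zero {d n z : ℕ} (h : IsCover d n z) : IsCover (d + 1) n (z + 1) := by
  classical
  obtain ⟨V, ι, _, i, J, hV, h0, hn, hz, hP⟩ := h
  refine ⟨V.image (fun v => (Fin.cons 0 v : Fin (d + 1) → ℝ)), Option ι, inferInstance,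
    fun c => c.elim 0 (fun c => (i c).succ), fun c => c.elim ∅ (fun c => (J c).map (Fin.succEmb d)),
    ?_, ?_, ?_, ?_, ?_⟩
  · intro x hx
    simp only [Finset.coe_image, Set.mem_image] at hx
    obtain ⟨v, hv, rfl⟩ := hx
    exact cons_mem_zeroOne (Or.inl rfl) (hV hv)
  · exact Finset.mem_image.2 ⟨0, h0, cons_zero_zero⟩
  · rw [Finset.card_image_of_injective _ (Fin.cons_right_injective (α := fun _ => ℝ) 0), hn]
  · simpa using hz
  · intro x
    constructor
    · intro hx
      refine convexHull_min ?_ (convex_cover _ _) hx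
      intro x hx
      simp only [Finset.coe_image, Set.mem_image] at hx
      obtain ⟨v, hv, rfl⟩ := hx
      obtain ⟨hv1, hv2⟩ := (hP v).1 (subset_convexHull ℝ _ hv)
      refine ⟨Fin.cases (by simp) (by simpa using hv1), ?_⟩
      rintro (_ | c)
      · simp
      · simpa using hv2 c
    · rintro ⟨hx1, hx2⟩
      obtain ⟨t, y, rfl⟩ : ∃ t y, x = (Fin.cons t y : Fin (d + 1) → ℝ) :=
        ⟨x 0, Fin.tail x, (Fin.cons_self_tail x).symm⟩
      have ht : t = 0 := le_antisymm (by simpa using hx2 none) (by simpa using (hx1 0).1)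
      subst ht
      refine cons_mem_convexHull (V := V) 0 (fun v hv => subset_convexHull ℝ _ ?_) ?_
      · exact Finset.mem_coe.2 (Finset.mem_image_of_mem _ hv)
      · exact (hP y).2 ⟨fun k => by simpa using hx1 k.succ, fun c => by simpa using hx2 (some c)⟩

/-- A leading one: the hull of a full cube in the slice `x 0 = 0` and of the given polytope in the
slice `x 0 = 1`. Every cover inequality merely gains the new index on its right-hand side. -/
lemma cover_cons_one {d : ℕ} {V : Finset (Fin d → ℝ)} (h0 : 0 ∈ V) {ι : Type}
    {i : ι → Fin d} {J : ι → Finset (Fin d)}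
    (hP : ∀ x, x ∈ convexHull ℝ (V : Set (Fin d → ℝ)) ↔
      (∀ k, 0 ≤ x k ∧ x k ≤ 1) ∧ ∀ c, x (i c) ≤ ∑ j ∈ J c, (1 - x j))
    {W : Set (Fin (d + 1) → ℝ)}
    (hW : W = (fun v => (Fin.cons 0 v : Fin (d + 1) → ℝ)) '' cubeVerts d ∪
      (fun v => (Fin.cons 1 v : Fin (d + 1) → ℝ)) '' V) (x : Fin (d + 1) → ℝ) :
    x ∈ convexHull ℝ W ↔ (∀ k, 0 ≤ x k ∧ x k ≤ 1) ∧
      ∀ c, x (i c).succ ≤ ∑ j ∈ Finset.cons 0 ((J c).map (Fin.succEmb d)) (by simp), (1 - x j) := by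
  constructor
  · intro hx
    refine convexHull_min ?_ (convex_cover (fun c => (i c).succ)
      (fun c => Finset.cons 0 ((J c).map (Fin.succEmb d)) (by simp))) hx
    rw [hW]
    rintro x (⟨v, hv, rfl⟩ | ⟨v, hv, rfl⟩)
    · have hv1 := (mem_convexHull_cubeVerts v).1 (subset_convexHull ℝ _ hv)
      refine ⟨Fin.cases (by simp) (by simpa using hv1), fun c => ?_⟩
      have : 0 ≤ ∑ j ∈ J c, (1 - v j) := Finset.sum_nonneg fun j _ => by linarith [(hv1 j).2]
      simp only [Finset.sum_cons, Finset.sum_map, Fin.coe_succEmb, Fin.cons_succ, Fin.cons_zero]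
      linarith [(hv1 (i c)).2]
    · obtain ⟨hv1, hv2⟩ := (hP v).1 (subset_convexHull ℝ _ hv)
      refine ⟨Fin.cases (by simp) (by simpa using hv1), fun c => ?_⟩
      simpa only [Finset.sum_cons, Finset.sum_map, Fin.coe_succEmb, Fin.cons_succ, Fin.cons_zero,
        sub_self, zero_add] using hv2 c
  · rintro ⟨hx1, hx2⟩
    obtain ⟨t, y, rfl⟩ : ∃ t y, x = (Fin.cons t y : Fin (d + 1) → ℝ) :=
      ⟨x 0, Fin.tail x, (Fin.cons_self_tail x).symm⟩
    have ht : 0 ≤ t ∧ t ≤ 1 := by simpa using hx1 0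
    have hy : ∀ k, 0 ≤ y k ∧ y k ≤ 1 := fun k => by simpa using hx1 k.succ
    have hyc : ∀ c, y (i c) ≤ (1 - t) + ∑ j ∈ J c, (1 - y j) := fun c => by
      simpa only [Finset.sum_cons, Finset.sum_map, Fin.coe_succEmb, Fin.cons_succ, Fin.cons_zero]
        using hx2 c
    -- Greedy splitting `y = min y (1 - t) + max 0 (y - (1 - t))`; at `t = 1` and `t = 0` the
    -- divisions by zero give the origin, which lies in both hulls.
    have hu : (fun k => min (y k) (1 - t) / (1 - t)) ∈
        convexHull ℝ (cubeVerts d : Set (Fin d → ℝ)) := by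
      refine (mem_convexHull_cubeVerts _).2 fun k => ?_
      have h1 : 0 ≤ 1 - t := by linarith
      exact ⟨div_nonneg (le_min (hy k).1 h1) h1, div_le_one_of_le₀ (min_le_right _ _) h1⟩
    have hv : (fun k => max 0 (y k - (1 - t)) / t) ∈ convexHull ℝ (V : Set (Fin d → ℝ)) := by
      rcases ht.1.eq_or_lt with h | h
      · subst h
        simpa [← Pi.zero_def] using subset_convexHull ℝ _ (Finset.mem_coe.2 h0)
      refine (hP _).2 ⟨fun k => ⟨by positivity, ?_⟩, fun c => ?_⟩
      · refine div_le_one_of_le₀ (max_le ht.1 ?_) ht.1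
        linarith [(hy k).2]
      · have key : ∀ j, 1 - max 0 (y j - (1 - t)) / t = min t (1 - y j) / t := by
          intro j
          have : min t (1 - y j) = t - max 0 (y j - (1 - t)) := by
            rcases le_total t (1 - y j) with h' | h'
            · rw [min_eq_left h', max_eq_left (by linarith)]; ring
            · rw [min_eq_right h', max_eq_right (by linarith)]; ring
          rw [this]
          field_simp
        simp only [key]
        rw [← Finset.sum_div]
        refine div_le_div_of_nonneg_right ?_ ht.1
        have hnn : ∀ j ∈ J c, 0 ≤ min t (1 - y j) := fun j _ =>
          le_min ht.1 (by linarith [(hy j).2])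
        by_cases hex : ∃ j ∈ J c, t ≤ 1 - y j
        · obtain ⟨j, hj, hj'⟩ := hex
          calc max 0 (y (i c) - (1 - t)) ≤ t := max_le ht.1 (by linarith [(hy (i c)).2])
            _ = min t (1 - y j) := (min_eq_left hj').symm
            _ ≤ _ := Finset.single_le_sum (f := fun j => min t (1 - y j)) hnn hj
        · push Not at hex
          refine max_le (Finset.sum_nonneg hnn) ?_
          rw [Finset.sum_congr rfl fun j hj => min_eq_right (hex j hj).le]
          linarith [hyc c]
    refine cons_combo_mem ht.1 ht.2
      (cons_mem_convexHull 0 (fun v hv => subset_convexHull ℝ _ ?_) hu)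
      (cons_mem_convexHull 1 (fun v hv => subset_convexHull ℝ _ ?_) hv) fun k => ?_
    · rw [hW]; exact Or.inl ⟨v, hv, rfl⟩
    · rw [hW]; exact Or.inr ⟨v, hv, rfl⟩
    · have e1 : (1 - t) * (min (y k) (1 - t) / (1 - t)) = min (y k) (1 - t) := by
        rcases ht.2.eq_or_lt with h | h
        · subst h
          simp [(hy k).1]
        · have : (1 - t) ≠ 0 := by linarith
          field_simp
      have e2 : t * (max 0 (y k - (1 - t)) / t) = max 0 (y k - (1 - t)) := by
        rcases ht.1.eq_or_lt with h | h
        · subst h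
          simp [(hy k).2]
        · field_simp
      rw [e1, e2]
      rcases le_total (y k) (1 - t) with h' | h'
      · rw [min_eq_left h', max_eq_left (by linarith)]; ring
      · rw [min_eq_right h', max_eq_right (by linarith)]; ring

/-- The vertices of the polytope in `cover_cons_one`. -/
noncomputable def liftVerts {d : ℕ} (V : Finset (Fin d → ℝ)) : Finset (Fin (d + 1) → ℝ) :=
  (cubeVerts d).map ⟨fun v => (Fin.cons 0 v : Fin (d + 1) → ℝ),
      Fin.cons_right_injective (α := fun _ => ℝ) 0⟩ |>.disjUnion
    (V.map ⟨fun v => (Fin.cons 1 v : Fin (d + 1) → ℝ),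
      Fin.cons_right_injective (α := fun _ => ℝ) 1⟩) (by
        rw [Finset.disjoint_left]
        intro x hx hx'
        obtain ⟨v, -, rfl⟩ := Finset.mem_map.1 hx
        obtain ⟨w, -, h⟩ := Finset.mem_map.1 hx'
        simpa using congrFun h 0)

lemma mem_liftVerts {d : ℕ} {V : Finset (Fin d → ℝ)} {x : Fin (d + 1) → ℝ} :
    x ∈ liftVerts V ↔ (∃ v ∈ cubeVerts d, (Fin.cons 0 v : Fin (d + 1) → ℝ) = x) ∨
      ∃ v ∈ V, (Fin.cons 1 v : Fin (d + 1) → ℝ) = x := by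
  simp [liftVerts]

lemma coe_liftVerts {d : ℕ} (V : Finset (Fin d → ℝ)) :
    (liftVerts V : Set (Fin (d + 1) → ℝ)) =
      (fun v => (Fin.cons 0 v : Fin (d + 1) → ℝ)) '' cubeVerts d ∪
      (fun v => (Fin.cons 1 v : Fin (d + 1) → ℝ)) '' V := by
  ext x
  simp [mem_liftVerts]

lemma card_liftVerts {d : ℕ} (V : Finset (Fin d → ℝ)) :
    (liftVerts V).card = 2 ^ d + V.card := by
  rw [liftVerts, Finset.card_disjUnion, Finset.card_map, Finset.card_map, card_cubeVerts]

lemma liftVerts_subset {d : ℕ} {V : Finset (Fin d → ℝ)}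
    (hV : (V : Set (Fin d → ℝ)) ⊆ ZeroOne d) :
    (liftVerts V : Set (Fin (d + 1) → ℝ)) ⊆ ZeroOne (d + 1) := by
  intro x hx
  rcases mem_liftVerts.1 (Finset.mem_coe.1 hx) with ⟨v, hv, rfl⟩ | ⟨v, hv, rfl⟩
  · exact cons_mem_zeroOne (Or.inl rfl) ((mem_cubeVerts v).1 hv)
  · exact cons_mem_zeroOne (Or.inr rfl) (hV hv)

lemma zero_mem_liftVerts {d : ℕ} (V : Finset (Fin d → ℝ)) : 0 ∈ liftVerts V :=
  mem_liftVerts.2 (Or.inl ⟨0, (mem_cubeVerts _).2 fun _ => Or.inl rfl, cons_zero_zero⟩)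

lemma IsCover.cons_one {d n z : ℕ} (h : IsCover d n z) : IsCover (d + 1) (2 ^ d + n) z := by
  obtain ⟨V, ι, _, i, J, hV, h0, hn, hz, hP⟩ := h
  exact ⟨liftVerts V, ι, inferInstance, fun c => (i c).succ,
    fun c => Finset.cons 0 ((J c).map (Fin.succEmb d)) (by simp), liftVerts_subset hV,
    zero_mem_liftVerts V, by rw [card_liftVerts, hn], hz,
    cover_cons_one h0 hP (coe_liftVerts V)⟩

/-- The number of cover inequalities is the number of zeros among the `d` binary digits of `n - 1`;
this is at most `d`, and at most `d - 1` if `n ≥ 2`. -/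
lemma exists_isCover (d : ℕ) : ∀ n, 1 ≤ n → n ≤ 2 ^ d →
    ∃ z, IsCover d n z ∧ z ≤ d ∧ (2 ≤ n → z + 1 ≤ d) := by
  induction d with
  | zero =>
    intro n h1 h2
    obtain rfl : n = 1 := by simp at h2; omega
    refine ⟨0, ⟨{0}, Empty, inferInstance, fun c => c.elim, fun c => c.elim, ?_, by simp, by simp,
      by simp, fun x => ?_⟩, le_rfl, by omega⟩
    · intro x _ k
      exact k.elim0
    · simp [Subsingleton.elim x 0]
  | succ d ih =>
    intro n h1 h2
    rcases le_or_gt n (2 ^ d) with h | h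
    · obtain ⟨z, hz, hz1, hz2⟩ := ih n h1 h
      exact ⟨z + 1, hz.cons_zero, by omega, fun h => by have := hz2 h; omega⟩
    · obtain ⟨z, hz, hz1, -⟩ := ih (n - 2 ^ d) (by omega) (by rw [pow_succ] at h2; omega)
      refine ⟨z, ?_, by omega, by omega⟩
      have := hz.cons_one
      rwa [Nat.add_sub_cancel' h.le] at this

/-! ### Full-dimensional polytopes in corner shape -/

/-- Adding a full cube below a cover polytope makes every cover inequality have positive
right-hand side when all variables are moved to the left. -/
lemma IsCover.isCorner {d n z : ℕ} (h : IsCover d n z) :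
    IsCornerPoly (d + 1) (2 ^ d + n) ((d + 1) + z) := by
  classical
  obtain ⟨V, ι, _, i, J, hV, h0, hn, hz, hP⟩ := h
  let J' : ι → Finset (Fin (d + 1)) := fun c =>
    Finset.cons 0 ((J c).map (Fin.succEmb d)) (by simp)
  let a : ι → Fin (d + 1) → ℝ := fun c k =>
    (Pi.single (i c).succ 1 : Fin (d + 1) → ℝ) k + if k ∈ J' c then 1 else 0
  refine ⟨liftVerts V, Fin (d + 1) ⊕ ι, inferInstance,
    Sum.elim (fun k => Pi.single k 1) a,
    Sum.elim (fun _ => 1) (fun c => (J' c).card), liftVerts_subset hV,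
    zero_mem_liftVerts V, ?_, by rw [card_liftVerts, hn], ?_, ⟨Sum.inl 0⟩, ?_, fun x => ?_⟩
  · intro k
    refine Fin.cases ?_ (fun k => ?_) k
    · refine mem_liftVerts.2 (Or.inr ⟨0, h0, ?_⟩)
      ext j
      refine Fin.cases ?_ (fun j => ?_) j <;> simp
    · refine mem_liftVerts.2 (Or.inl ⟨Pi.single k 1, (mem_cubeVerts _).2 fun j => ?_, ?_⟩)
      · by_cases hj : j = k
        · subst hj; simp
        · simp [hj]
      · ext j
        refine Fin.cases ?_ (fun j => ?_) j
        · simp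
        · simp [Pi.single_apply]
  · simpa using hz
  · rintro (k | c)
    · simp
    · simp only [Sum.elim_inr, J', Finset.card_cons]
      positivity
  · rw [cover_cons_one h0 hP (coe_liftVerts V)]
    have e : ∀ c, (x (i c).succ ≤ ∑ j ∈ J' c, (1 - x j)) ↔
        ∑ k, a c k * x k ≤ (J' c).card := by
      intro c
      have : ∑ k, a c k * x k = x (i c).succ + ∑ j ∈ J' c, x j := by
        simp [a, add_mul, Finset.sum_add_distrib, Pi.single_apply]
      rw [this, Finset.sum_sub_distrib]
      simp only [Finset.sum_const, nsmul_eq_mul, mul_one]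
      constructor <;> intro h <;> linarith
    have e2 : ∀ k, ∑ l, (Pi.single k (1 : ℝ) : Fin (d + 1) → ℝ) l * x l = x k := by
      intro k
      simp [Pi.single_apply]
    rw [Sum.forall, forall_and, and_assoc]
    simp only [Sum.elim_inl, Sum.elim_inr, e2]
    exact and_congr_right fun _ => and_congr_right fun _ => forall_congr' e

/-- The segment `[0, 1]`. -/
lemma isCorner_one : IsCornerPoly 1 2 1 := by
  refine ⟨cubeVerts 1, Unit, inferInstance, fun _ _ => 1, fun _ => 1,
    fun x hx => (mem_cubeVerts x).1 hx, (mem_cubeVerts _).2 fun _ => Or.inl rfl, fun i => ?_,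
    by simp [card_cubeVerts], by simp, inferInstance, by simp, fun x => ?_⟩
  · refine (mem_cubeVerts _).2 fun j => Or.inr ?_
    simp [Subsingleton.elim j i]
  · rw [mem_convexHull_cubeVerts]
    simp

/-- The pyramid over a corner polytope. Its inequalities are the homogenisations
`A c · y ≤ β c * (1 - t)`, and the bound `t ≤ 1` comes for free because the base is bounded. -/
lemma IsCornerPoly.pyramid {d n k : ℕ} (h : IsCornerPoly d n k) : IsCornerPoly (d + 1) (n + 1) k := by
  classical
  obtain ⟨V, ι, _, A, β, hV, h0, hs, hn, hk, ⟨c₀⟩, hβ, hP⟩ := h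
  have hdis : (Fin.cons 1 0 : Fin (d + 1) → ℝ) ∉
      V.image (fun v => (Fin.cons 0 v : Fin (d + 1) → ℝ)) := by
    intro hx
    obtain ⟨v, -, hv⟩ := Finset.mem_image.1 hx
    simpa using congrFun hv 0
  refine ⟨insert (Fin.cons 1 0) (V.image (fun v => (Fin.cons 0 v : Fin (d + 1) → ℝ))), ι,
    inferInstance, fun c => Fin.cons (β c) (A c), β, ?_, ?_, ?_, ?_, hk, ⟨c₀⟩, hβ, fun x => ?_⟩
  · intro x hx
    rcases Finset.mem_insert.1 (Finset.mem_coe.1 hx) with rfl | hx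
    · exact cons_mem_zeroOne (Or.inr rfl) fun _ => Or.inl rfl
    · obtain ⟨v, hv, rfl⟩ := Finset.mem_image.1 hx
      exact cons_mem_zeroOne (Or.inl rfl) (hV hv)
  · exact Finset.mem_insert_of_mem (Finset.mem_image.2 ⟨0, h0, cons_zero_zero⟩)
  · intro j
    refine Fin.cases ?_ (fun j => ?_) j
    · refine Finset.mem_insert.2 (Or.inl ?_)
      ext l
      refine Fin.cases ?_ (fun l => ?_) l <;> simp
    · refine Finset.mem_insert_of_mem (Finset.mem_image.2 ⟨_, hs j, ?_⟩)
      ext l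
      refine Fin.cases ?_ (fun l => ?_) l
      · simp
      · simp [Pi.single_apply]
  · rw [Finset.card_insert_of_notMem hdis,
      Finset.card_image_of_injective _ (Fin.cons_right_injective (α := fun _ => ℝ) 0), hn]
  · constructor
    · intro hx
      refine convexHull_min ?_ (convex_corner _ _) hx
      intro x hx
      rcases Finset.mem_insert.1 (Finset.mem_coe.1 hx) with rfl | hx
      · refine ⟨Fin.cases (by simp) (by simp), fun c => ?_⟩
        simp [Fin.sum_univ_succ]
      · obtain ⟨v, hv, rfl⟩ := Finset.mem_image.1 hx
        obtain ⟨hv1, hv2⟩ := (hP v).1 (subset_convexHull ℝ _ hv)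
        refine ⟨Fin.cases (by simp) (by simpa using hv1), fun c => ?_⟩
        simpa [Fin.sum_univ_succ] using hv2 c
    · rintro ⟨hx1, hx2⟩
      obtain ⟨t, y, rfl⟩ : ∃ t y, x = (Fin.cons t y : Fin (d + 1) → ℝ) :=
        ⟨x 0, Fin.tail x, (Fin.cons_self_tail x).symm⟩
      have ht : 0 ≤ t := by simpa using hx1 0
      have hy : ∀ k, 0 ≤ y k := fun k => by simpa using hx1 k.succ
      have hyc : ∀ c, ∑ k, A c k * y k ≤ β c * (1 - t) := fun c => by
        have := hx2 c
        simp only [Fin.sum_univ_succ, Fin.cons_zero, Fin.cons_succ] at this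
        linarith
      -- The base is bounded, so its recession cone is trivial.
      have hrec : (∀ c, ∑ k, A c k * y k ≤ 0) → ∀ k, y k = 0 := by
        intro hA k
        by_contra hne
        have hpos : 0 < y k := lt_of_le_of_ne (hy k) (Ne.symm hne)
        have hmem : (2 / y k) • y ∈ convexHull ℝ (V : Set (Fin d → ℝ)) := by
          refine (hP _).2 ⟨fun l => ?_, fun c => ?_⟩
          · have := hy l
            simp only [Pi.smul_apply, smul_eq_mul]
            positivity
          · have e : ∑ l, A c l * ((2 / y k) • y) l = (2 / y k) * ∑ l, A c l * y l := by
              rw [Finset.mul_sum]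
              refine Finset.sum_congr rfl fun l _ => ?_
              simp only [Pi.smul_apply, smul_eq_mul]
              ring
            rw [e]
            exact (mul_nonpos_of_nonneg_of_nonpos (by positivity) (hA c)).trans (hβ c).le
        have := (mem_Icc_of_mem_convexHull hV hmem k).2
        simp only [Pi.smul_apply, smul_eq_mul] at this
        rw [div_mul_cancel₀ _ hne] at this
        linarith
      have ht1 : t ≤ 1 := by
        by_contra hcon
        push Not at hcon
        have hy0 := hrec fun c =>
          (hyc c).trans (mul_nonpos_of_nonneg_of_nonpos (hβ c).le (by linarith))
        have := hyc c₀
        simp only [hy0, mul_zero, Finset.sum_const_zero] at this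
        nlinarith [hβ c₀]
      have hy1 : t = 1 → ∀ k, y k = 0 := fun h => hrec fun c => by simpa [h] using hyc c
      have hu : (fun k => y k / (1 - t)) ∈ convexHull ℝ (V : Set (Fin d → ℝ)) := by
        refine (hP _).2 ⟨fun k => div_nonneg (hy k) (by linarith), fun c => ?_⟩
        simp only [← mul_div_assoc]
        rw [← Finset.sum_div]
        exact div_le_of_le_mul₀ (by linarith) (hβ c).le (hyc c)
      refine cons_combo_mem (v := 0) ht ht1
        (cons_mem_convexHull 0 (fun v hv => subset_convexHull ℝ _ ?_) hu)
        (subset_convexHull ℝ _ ?_) fun k => ?_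
      · exact Finset.mem_coe.2 (Finset.mem_insert_of_mem (Finset.mem_image_of_mem _ hv))
      · exact Finset.mem_coe.2 (Finset.mem_insert_self _ _)
      · rcases ht1.eq_or_lt with h | h
        · simp [hy1 h k]
        · have : (1 - t) ≠ 0 := by linarith
          simp
          field_simp

/-- For `n ≤ 2 ^ (d - 1) + 1` a pyramid is taken; for larger `n` a revlex-initial polytope with
`n - 2 ^ (d - 1) ≥ 2` vertices in its upper slice, which has at most `d + (d - 2)` inequalities
besides nonnegativity. -/
lemma exists_isCorner (d : ℕ) : ∀ n, d + 2 ≤ n → n ≤ 2 ^ (d + 1) →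
    ∃ k, IsCornerPoly (d + 1) n k ∧ 2 ^ k ≤ n ^ 2 := by
  induction d with
  | zero =>
    intro n h1 h2
    obtain rfl : n = 2 := by simp at h2; omega
    exact ⟨1, isCorner_one, by norm_num⟩
  | succ d ih =>
    intro n h1 h2
    rcases le_or_gt n (2 ^ (d + 1) + 1) with h | h
    · obtain ⟨k, hk, hk2⟩ := ih (n - 1) (by omega) (by omega)
      refine ⟨k, ?_, hk2.trans (Nat.pow_le_pow_left (by omega) 2)⟩
      have := hk.pyramid
      rwa [Nat.sub_add_cancel (by omega)] at this
    · obtain ⟨z, hz, -, hz2⟩ := exists_isCover (d + 1) (n - 2 ^ (d + 1)) (by omega)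
        (by rw [pow_succ 2 (d + 1)] at h2; omega)
      have hz3 := hz2 (by omega)
      refine ⟨d + 1 + 1 + z, ?_, ?_⟩
      · have := hz.isCorner
        rwa [Nat.add_sub_cancel' (by omega)] at this
      · calc 2 ^ (d + 1 + 1 + z) ≤ 2 ^ ((d + 1) * 2) :=
              Nat.pow_le_pow_right (by norm_num) (by omega)
          _ = (2 ^ (d + 1)) ^ 2 := by rw [pow_mul]
          _ ≤ n ^ 2 := Nat.pow_le_pow_left (by omega) 2

/-! ### Counting facets -/

/-- A nonempty convex set has a point from which one can move slightly away from any point of the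
affine hull without leaving the set. -/
lemma exists_relint {d : ℕ} {F : Set (Fin d → ℝ)} (hF : Convex ℝ F) (hne : F.Nonempty) :
    ∃ x ∈ F, ∀ y ∈ affineSpan ℝ F, ∃ ε : ℝ, 0 < ε ∧ x + ε • (x - y) ∈ F := by
  obtain ⟨x, hx⟩ := hne.intrinsicInterior hF
  refine ⟨x, intrinsicInterior_subset hx, fun y hy => ?_⟩
  obtain ⟨x', hx', rfl⟩ := mem_intrinsicInterior.1 hx
  let γ : ℝ → affineSpan ℝ F := fun ε =>
    ⟨AffineMap.lineMap (x' : Fin d → ℝ) y (-ε), AffineMap.lineMap_mem _ x'.2 hy⟩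
  have hγ : Continuous γ := by
    refine Continuous.subtype_mk ?_ _
    simp only [AffineMap.lineMap_apply, vsub_eq_sub, vadd_eq_add]
    fun_prop
  have hγ0 : γ 0 = x' := by ext1; simp [γ]
  have hev : ∀ᶠ ε in nhds (0 : ℝ), γ ε ∈ ((↑) ⁻¹' F : Set (affineSpan ℝ F)) := by
    refine hγ.continuousAt.eventually_mem ?_
    rw [hγ0]
    exact mem_interior_iff_mem_nhds.1 hx'
  obtain ⟨ε, hε, hpos⟩ :=
    ((hev.filter_mono nhdsWithin_le_nhds).and (self_mem_nhdsWithin (s := Set.Ioi (0 : ℝ)))).exists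
  refine ⟨ε, hpos, ?_⟩
  have : (γ ε : Fin d → ℝ) ∈ F := hε
  convert this using 1
  simp only [γ, AffineMap.lineMap_apply, vsub_eq_sub, vadd_eq_add]
  module

lemma mem_of_extreme {d : ℕ} {P F : Set (Fin d → ℝ)} (hF : IsExtreme ℝ P F) {x y : Fin d → ℝ}
    {ε : ℝ} (hx : x ∈ F) (hy : y ∈ P) (hε : 0 < ε) (hz : x + ε • (x - y) ∈ P) : y ∈ F := by
  refine hF.2 hy hz hx ⟨ε / (1 + ε), 1 / (1 + ε), by positivity, by positivity, ?_, ?_⟩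
  · field_simp; ring
  · ext i
    simp only [Pi.add_apply, Pi.smul_apply, Pi.sub_apply, smul_eq_mul]
    field_simp
    ring

/-- Every facet of a full-dimensional polyhedron is cut out by one of the defining inequalities.
The empty set has `adim` zero, so that it is a spurious facet in dimension one. -/
lemma facet_mem_range {d : ℕ} (hd : 0 < d) {ι : Type} [Finite ι] (g : ι → (Fin d → ℝ) →ₗ[ℝ] ℝ)
    (β : ι → ℝ) (hg : ∀ c, g c = 0 → β c ≠ 0) {P : Set (Fin d → ℝ)}
    (hP : ∀ x, x ∈ P ↔ ∀ c, g c x ≤ β c) (hdim : adim P = d) {F : Set (Fin d → ℝ)}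
    (hF : IsFaceOf P F) (hFd : adim F = d - 1) (hne : F.Nonempty) :
    F ∈ Set.range fun c => P ∩ {x | g c x = β c} := by
  obtain ⟨x, hxF, hx⟩ := exists_relint hF.1 hne
  have hFP : F ⊆ P := hF.2.1
  have hex : ∃ c, g c x = β c := by
    by_contra hcon
    push Not at hcon
    have hlt : ∀ c, g c x < β c := fun c => lt_of_le_of_ne ((hP x).1 (hFP hxF) c) (hcon c)
    have hPF : P ⊆ F := by
      intro y hy
      have hev : ∀ᶠ ε in nhds (0 : ℝ), ∀ c, g c x + ε * (g c x - g c y) < β c := by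
        refine Filter.eventually_all.2 fun c => ?_
        have hc : Continuous fun ε : ℝ => g c x + ε * (g c x - g c y) := by fun_prop
        exact hc.continuousAt.eventually_lt continuousAt_const (by simpa using hlt c)
      obtain ⟨ε, hε, hpos⟩ := ((hev.filter_mono nhdsWithin_le_nhds).and
        (self_mem_nhdsWithin (s := Set.Ioi (0 : ℝ)))).exists
      refine mem_of_extreme hF.2 hxF hy hpos ((hP _).2 fun c => ?_)
      simpa using (hε c).le
    rw [hFP.antisymm hPF] at hFd
    omega
  obtain ⟨c, hc⟩ := hex
  have hFH : ∀ y ∈ F, g c y = β c := by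
    intro y hy
    obtain ⟨ε, hε, hz⟩ := hx y (subset_affineSpan ℝ F hy)
    have h1 := (hP _).1 (hFP hz) c
    have h2 := (hP _).1 (hFP hy) c
    simp only [map_add, map_smul, map_sub, smul_eq_mul, hc] at h1
    nlinarith
  have hg0 : g c ≠ 0 := fun h => hg c h (by rw [← hc, h]; rfl)
  have hle : (affineSpan ℝ F).direction ≤ LinearMap.ker (g c) := by
    rw [direction_affineSpan, vectorSpan_def, Submodule.span_le]
    rintro _ ⟨a, ha, b, hb, rfl⟩
    simp [hFH a ha, hFH b hb]
  have hker : Module.finrank ℝ (LinearMap.ker (g c)) = d - 1 := by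
    have h1 := (g c).finrank_range_add_finrank_ker
    have h2 : LinearMap.range (g c) = ⊤ := LinearMap.range_eq_top.2 (LinearMap.surjective hg0)
    rw [h2] at h1
    simp at h1
    omega
  have heq := Submodule.eq_of_le_of_finrank_eq hle (by rw [hker]; exact hFd)
  refine ⟨c, Set.Subset.antisymm ?_ fun y hy => ⟨hFP hy, hFH y hy⟩⟩
  rintro y ⟨hyP, hyH⟩
  have hyA : y ∈ affineSpan ℝ F := by
    have hd : y - x ∈ (affineSpan ℝ F).direction := by
      rw [heq, LinearMap.mem_ker, map_sub, hc, hyH, sub_self]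
    simpa using AffineSubspace.vadd_mem_of_mem_direction hd (subset_affineSpan ℝ F hxF)
  obtain ⟨ε, hε, hz⟩ := hx y hyA
  exact mem_of_extreme hF.2 hxF hyP hε (hFP hz)

lemma adim_eq {d : ℕ} {V : Set (Fin d → ℝ)} (h0 : 0 ∈ V) (hs : ∀ i, Pi.single i 1 ∈ V) :
    adim (convexHull ℝ V) = d := by
  have : vectorSpan ℝ V = ⊤ := by
    rw [eq_top_iff, ← (Pi.basisFun ℝ (Fin d)).span_eq, Submodule.span_le]
    rintro _ ⟨i, rfl⟩
    simpa using vsub_mem_vectorSpan ℝ (hs i) h0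
  rw [adim, affineSpan_convexHull, direction_affineSpan, this]
  simp

lemma extremePoints_eq {d : ℕ} {V : Set (Fin d → ℝ)} (hV : V ⊆ ZeroOne d) :
    (convexHull ℝ V).extremePoints ℝ = V := by
  refine Set.Subset.antisymm extremePoints_convexHull_subset fun x hx => ?_
  refine mem_extremePoints_iff_left.2 ⟨subset_convexHull ℝ V hx, ?_⟩
  rintro y hy z hz ⟨a, b, ha, hb, hab, rfl⟩
  ext k
  have hy' := mem_Icc_of_mem_convexHull hV hy k
  have hz' := mem_Icc_of_mem_convexHull hV hz k
  have := hV hx k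
  simp only [Pi.add_apply, Pi.smul_apply, smul_eq_mul] at this ⊢
  have hb' : b = 1 - a := by linarith
  subst hb'
  rcases this with h | h
  · have : a * y k = 0 := by nlinarith [mul_nonneg ha.le hy'.1, mul_nonneg hb.le hz'.1]
    have hyk : y k = 0 := by simpa [ha.ne'] using this
    rw [h, hyk]
  · have : a * (1 - y k) = 0 := by
      nlinarith [mul_nonneg ha.le (sub_nonneg.2 hy'.2), mul_nonneg hb.le (sub_nonneg.2 hz'.2)]
    have hyk : 1 - y k = 0 := by simpa [ha.ne'] using this
    rw [h]; linarith

lemma IsCornerPoly.facets {d n k : ℕ} (hd : 0 < d) (h : IsCornerPoly d n k) :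
    ∃ V : Set (Fin d → ℝ), V ⊆ ZeroOne d ∧ adim (convexHull ℝ V) = d ∧
      ((convexHull ℝ V).extremePoints ℝ).ncard = n ∧
      Set.ncard {F : Set (Fin d → ℝ) | IsFaceOf (convexHull ℝ V) F ∧ adim F = d - 1}
        ≤ d + k + (if d = 1 then 1 else 0) := by
  obtain ⟨V, ι, _, A, β, hV, h0, hs, hn, hk, -, hβ, hP⟩ := h
  have hdim : adim (convexHull ℝ (V : Set (Fin d → ℝ))) = d :=
    adim_eq (Finset.mem_coe.2 h0) fun i => Finset.mem_coe.2 (hs i)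
  refine ⟨V, hV, hdim, by rw [extremePoints_eq hV, Set.ncard_coe_finset, hn], ?_⟩
  let g : Fin d ⊕ ι → (Fin d → ℝ) →ₗ[ℝ] ℝ :=
    Sum.elim (fun i => -LinearMap.proj i) (fun c => ∑ i, A c i • LinearMap.proj i)
  let b : Fin d ⊕ ι → ℝ := Sum.elim (fun _ => 0) β
  have hg : ∀ c, g c = 0 → b c ≠ 0 := by
    rintro (i | c) hc
    · have := LinearMap.congr_fun hc (Pi.single i 1)
      simp [g] at this
    · exact (hβ c).ne'
  have hP' : ∀ x, x ∈ convexHull ℝ (V : Set (Fin d → ℝ)) ↔ ∀ c, g c x ≤ b c := by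
    intro x
    rw [hP, Sum.forall]
    simp [g, b]
  let R := Set.range fun c => convexHull ℝ (V : Set (Fin d → ℝ)) ∩ {x | g c x = b c}
  have hR : R.ncard ≤ d + k := by
    have h1 : R.ncard ≤ Nat.card (Fin d ⊕ ι) := by
      rw [← Set.ncard_univ]
      simpa [R] using Set.ncard_image_le (s := (Set.univ : Set (Fin d ⊕ ι)))
        (f := fun c => convexHull ℝ (V : Set (Fin d → ℝ)) ∩ {x | g c x = b c})
    have h2 : Nat.card (Fin d ⊕ ι) = d + Fintype.card ι := by simp
    omega
  have hRf : R.Finite := Set.finite_range _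
  split_ifs with hd1
  · refine (Set.ncard_le_ncard (t := insert ∅ R) ?_ (hRf.insert _)).trans
      ((Set.ncard_insert_le _ _).trans (by omega))
    rintro F ⟨hF, hFd⟩
    rcases F.eq_empty_or_nonempty with rfl | hne
    · exact Or.inl rfl
    · exact Or.inr (facet_mem_range hd g b hg hP' hdim hF hFd hne)
  · refine (Set.ncard_le_ncard (t := R) ?_ hRf).trans (by omega)
    rintro F ⟨hF, hFd⟩
    rcases F.eq_empty_or_nonempty with rfl | hne
    · have h0 : adim (∅ : Set (Fin d → ℝ)) = 0 := by simp [adim]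
      omega
    · exact facet_mem_range hd g b hg hP' hdim hF hFd hne

/-- for `d + 1 ≤ n ≤ 2^d` there is a `d`-dimensional 0/1-polytope
in ℝ^d with exactly `n` vertices and at most `d + 2·log₂ n` facets. -/
theorem stmt16 (d n : ℕ) (hd : 0 < d) (hn : 0 < n)
    (h1 : d + 1 ≤ n) (h2 : n ≤ 2 ^ d) :
    ∃ V : Set (Fin d → ℝ), V ⊆ ZeroOne d ∧
      adim (convexHull ℝ V) = d ∧
      ((convexHull ℝ V).extremePoints ℝ).ncard = n ∧
      (Set.ncard {F : Set (Fin d → ℝ) |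
          IsFaceOf (convexHull ℝ V) F ∧ adim F = d - 1} : ℝ)
        ≤ d + 2 * Real.logb 2 n := by
  by_cases hd1 : d = 1
  · -- The segment has the facets `{0}`, `{1}` and, under the convention `adim ∅ = 0`, also `∅`.
    subst hd1
    obtain rfl : n = 2 := by simp at h2; omega
    obtain ⟨V, hV, ha, he, hf⟩ := isCorner_one.facets one_pos
    refine ⟨V, hV, ha, he, (Nat.cast_le.2 hf).trans ?_⟩
    norm_num
  · obtain ⟨e, rfl⟩ : ∃ e, d = e + 1 := ⟨d - 1, by omega⟩
    obtain ⟨k, hk, hk2⟩ := exists_isCorner e n (by omega) h2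
    obtain ⟨V, hV, ha, he, hf⟩ := hk.facets hd
    refine ⟨V, hV, ha, he, (Nat.cast_le.2 hf).trans ?_⟩
    rw [if_neg hd1, add_zero, Nat.cast_add]
    have hlog : (k : ℝ) ≤ 2 * Real.logb 2 n := by
      have h3 : ((2 : ℝ) ^ k) ≤ (n : ℝ) ^ 2 := by exact_mod_cast hk2
      have h4 := Real.logb_le_logb_of_le (b := 2) (by norm_num) (by positivity) h3
      simpa [Real.logb_pow] using h4
    linarith
end
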